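/- Let 0<r<1, 1≤p≤∞, α>0 and β∈ℝ, and let p' satisfy 1/p+1/p'=1. Then for every integer n ≥ n₀(α,r,p) one has E_n(C^{α,r}_{β,p})_C = e^{-α n^r} n^{(1-r)/p} [ (‖cos t‖_{p'} / (π^{1+1/p'} (αr)^{1/p})) · J_{p'}(π n^{1-r}/(αr)) + γ_n · ( (1/(αr)^{1+1/p}) · J_{p'}(π n^{1-r}/(αr)) · n^{-r} + n^{-(1-r)/p} ) ], where the quantity γ_n = γ_n(α,r,β,p) satisfies |γ_n| ≤ (14π)². -/

import Mathlib

open MeasureTheory Real Filter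
open scoped ENNReal

/-- The generalized Poisson kernel `P_{α,r,β}(t) = Σ_{k=1}^∞ e^{-α k^r} cos(kt − βπ/2)`. -/
noncomputable def genPoissonKernel (α r β : ℝ) (t : ℝ) : ℝ :=
  ∑' k : ℕ, Real.exp (-α * ((k : ℝ) + 1) ^ r) * Real.cos (((k : ℝ) + 1) * t - β * π / 2)

/-- Fourier cosine coefficient `a_k = (1/π)∫_{-π}^{π} f(t) cos(kt) dt`. -/
noncomputable def fourierCoefA (f : ℝ → ℝ) (k : ℕ) : ℝ :=
  (1 / π) * ∫ t in (-π)..π, f t * Real.cos (k * t)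

/-- Fourier sine coefficient `b_k = (1/π)∫_{-π}^{π} f(t) sin(kt) dt`. -/
noncomputable def fourierCoefB (f : ℝ → ℝ) (k : ℕ) : ℝ :=
  (1 / π) * ∫ t in (-π)..π, f t * Real.sin (k * t)

/-- Partial Fourier sum of order `m` of `f`. -/
noncomputable def fourierSum (m : ℕ) (f : ℝ → ℝ) (x : ℝ) : ℝ :=
  fourierCoefA f 0 / 2 +
    ∑ k ∈ Finset.Icc 1 m, (fourierCoefA f k * Real.cos (k * x) + fourierCoefB f k * Real.sin (k * x))

/-- The class `C^{α,r}_{β,p}` of generalized Poisson integrals. -/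
def poissonClass (α r β : ℝ) (p : ℝ≥0∞) : Set (ℝ → ℝ) :=
  {f | (∀ x, f (x + 2 * π) = f x) ∧ ∃ a₀ : ℝ, ∃ φ : ℝ → ℝ,
    (∀ x, φ (x + 2 * π) = φ x) ∧
    eLpNorm φ p (volume.restrict (Set.Ioc (0 : ℝ) (2 * π))) ≤ 1 ∧
    (∫ t in (0 : ℝ)..(2 * π), φ t) = 0 ∧
    ∀ x, f x = a₀ / 2 + (1 / π) * ∫ t in (-π)..π, genPoissonKernel α r β (x - t) * φ t}

/-- `E_n(C^{α,r}_{β,p})_C`: uniform deviation of Fourier sums of order `n-1` on the class. -/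
noncomputable def EnC (α r β : ℝ) (p : ℝ≥0∞) (n : ℕ) : ℝ :=
  ⨆ f ∈ poissonClass α r β p, ⨆ x : ℝ, |f x - fourierSum (n - 1) f x|

/-- `J_s(v) = ‖1/√(t²+1)‖_{L_s[0,v]}`. -/
noncomputable def Jfun (s : ℝ≥0∞) (v : ℝ) : ℝ :=
  (eLpNorm (fun t : ℝ => 1 / Real.sqrt (t ^ 2 + 1)) s (volume.restrict (Set.Ioc (0 : ℝ) v))).toReal

/-- `‖cos‖_{L_s}` over a period. -/
noncomputable def cosNorm (s : ℝ≥0∞) : ℝ :=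
  (eLpNorm (fun t : ℝ => Real.cos t) s (volume.restrict (Set.Ioc (0 : ℝ) (2 * π)))).toReal

/-- `n₀(α,r,p)`: the smallest positive integer satisfying condition (n_p). -/
noncomputable def n₀ (α r : ℝ) (p : ℝ≥0∞) : ℕ :=
  sInf {n : ℕ | 0 < n ∧
    1 / (α * r) * (n : ℝ) ^ (-r) + α * r * (if p = ∞ then 1 else p.toReal) * (n : ℝ) ^ (-(1 - r)) ≤
      (if p = 1 then 1 / 14 else if p = ∞ then 1 / (3 * π) ^ 3
        else (1 / (3 * π) ^ 3) * (p.toReal - 1) / p.toReal)}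


/-! ### Part A : elementary estimates for the coefficients -/

lemma A_rpow_upper {x r : ℝ} (hx : 0 < x) (h0 : 0 < r) (h1 : r < 1) :
    (x + 1) ^ r - x ^ r ≤ r * x ^ (r - 1) := by
  have h := rpow_one_add_le_one_add_mul_self (s := 1 / x) (p := r)
    (by have : 0 < 1 / x := by positivity
        linarith) h0.le h1.le
  have e : x + 1 = x * (1 + 1 / x) := by field_simp
  have hx1 : (0:ℝ) ≤ 1 + 1 / x := by positivity
  rw [e, Real.mul_rpow hx.le hx1, Real.rpow_sub hx, Real.rpow_one]
  have hp : 0 < x ^ r := Real.rpow_pos_of_pos hx r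
  have := mul_le_mul_of_nonneg_left h hp.le
  have e2 : x ^ r * (1 + r * (1 / x)) = x ^ r + r * (x ^ r / x) := by field_simp
  linarith

lemma A_rpow_lower {x r : ℝ} (hx : 0 ≤ x) (h0 : 0 < r) (h1 : r < 1) :
    r * (x + 1) ^ (r - 1) ≤ (x + 1) ^ r - x ^ r := by
  have hy : 0 < x + 1 := by linarith
  have hs : 1 / (x + 1) ≤ 1 := by rw [div_le_one hy]; linarith
  have h := rpow_one_add_le_one_add_mul_self (s := -(1 / (x + 1))) (p := r)
    (by linarith) h0.le h1.le
  have e : x ^ r = (x + 1) ^ r * (1 + -(1 / (x + 1))) ^ r := by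
    rw [← Real.mul_rpow hy.le (by linarith)]
    congr 1; field_simp; ring
  have hp : 0 < (x + 1) ^ r := Real.rpow_pos_of_pos hy r
  rw [e, Real.rpow_sub hy, Real.rpow_one]
  have := mul_le_mul_of_nonneg_left h hp.le
  have e2 : (x + 1) ^ r * (1 + r * -(1 / (x + 1))) = (x + 1) ^ r - r * ((x + 1) ^ r / (x + 1)) := by
    field_simp
    ring
  linarith

/-- normalized coefficients -/
noncomputable def aco (α r : ℝ) (n : ℕ) (k : ℕ) : ℝ :=
  Real.exp (-α * ((n : ℝ) + k) ^ r + α * (n : ℝ) ^ r)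

lemma aco_pos (α r : ℝ) (n k : ℕ) : 0 < aco α r n k := Real.exp_pos _

lemma aco_zero (α r : ℝ) (n : ℕ) : aco α r n 0 = 1 := by simp [aco]

noncomputable def dco (α r : ℝ) (n : ℕ) (k : ℕ) : ℝ :=
  α * (((n : ℝ) + k + 1) ^ r - ((n : ℝ) + k) ^ r)

lemma aco_succ (α r : ℝ) (n k : ℕ) :
    aco α r n (k + 1) = aco α r n k * Real.exp (-dco α r n k) := by
  rw [aco, aco, dco, ← Real.exp_add]
  congr 1; push_cast; rw [← add_assoc]; ring

lemma dco_le {α r : ℝ} (hα : 0 < α) (h0 : 0 < r) (h1 : r < 1) {n : ℕ} (hn : 0 < n) (k : ℕ) :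
    dco α r n k ≤ α * r * (n : ℝ) ^ (-(1 - r)) := by
  have hn' : (0:ℝ) < n := by exact_mod_cast hn
  have h := A_rpow_upper (x := (n:ℝ) + k) (by positivity) h0 h1
  have h2 : ((n:ℝ) + k) ^ (r - 1) ≤ (n : ℝ) ^ (r - 1) :=
    Real.rpow_le_rpow_of_nonpos hn' (by simp) (by linarith)
  rw [dco, mul_assoc, show -(1 - r) = r - 1 by ring]
  apply mul_le_mul_of_nonneg_left _ hα.le
  exact h.trans (mul_le_mul_of_nonneg_left h2 h0.le)

lemma dco_ge {α r : ℝ} (hα : 0 < α) (h0 : 0 < r) (h1 : r < 1) {n : ℕ} (hn : 0 < n) (k : ℕ) :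
    α * r * (n : ℝ) ^ (-(1 - r)) * (n / (n + k + 1)) ≤ dco α r n k := by
  have hn' : (0:ℝ) < n := by exact_mod_cast hn
  have hy : (0:ℝ) < n + k + 1 := by positivity
  have h := A_rpow_lower (x := (n:ℝ) + k) (by positivity) h0 h1
  have hq : (n / (n + k + 1) : ℝ) ≤ 1 := by
    rw [div_le_one hy]; linarith [(Nat.cast_nonneg k : (0:ℝ) ≤ k)]
  have hq0 : (0:ℝ) < n / (n + k + 1) := by positivity
  have h3 : (n / (n + k + 1) : ℝ) ≤ (n / (n + k + 1) : ℝ) ^ (1 - r) := by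
    have := Real.rpow_le_rpow_of_exponent_ge hq0 hq (show 1 - r ≤ 1 by linarith)
    simpa using this
  have h4 : (n:ℝ) ^ (-(1 - r)) * (n / (n + k + 1) : ℝ) ^ (1 - r) = ((n:ℝ) + k + 1) ^ (r - 1) := by
    rw [Real.div_rpow hn'.le hy.le, Real.rpow_neg hn'.le, show r - 1 = -(1 - r) by ring,
      Real.rpow_neg hy.le]
    have := Real.rpow_pos_of_pos hn' (1 - r)
    field_simp
  rw [dco, mul_assoc, mul_assoc]
  apply mul_le_mul_of_nonneg_left _ hα.le
  refine le_trans ?_ h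
  apply mul_le_mul_of_nonneg_left _ h0.le
  rw [← h4]
  exact mul_le_mul_of_nonneg_left h3 (Real.rpow_nonneg hn'.le _)

/-- The standing assumptions. -/
structure Good (α r : ℝ) (n : ℕ) (δ ε : ℝ) : Prop where
  hα : 0 < α
  h0 : 0 < r
  h1 : r < 1
  hn : 0 < n
  hδ : δ = α * r * (n : ℝ) ^ (-(1 - r))
  hδ0 : 0 < δ
  hδ1 : δ ≤ 1 / 14
  hε0 : 0 < ε
  hε1 : ε ≤ 1 / 14
  hnδ : (n : ℝ) * δ * ε = 1

section
variable {α r : ℝ} {n : ℕ} {δ ε : ℝ}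

lemma Good.npos (G : Good α r n δ ε) : (0:ℝ) < n := by exact_mod_cast G.hn

lemma Good.step (G : Good α r n δ ε) (k : ℕ) :
    aco α r n (k + 1) * ((n:ℝ) + k + 1 + n * δ) ≤ aco α r n k * ((n:ℝ) + k + 1) := by
  have hn := G.npos
  have hy : (0:ℝ) < n + k + 1 := by positivity
  have h := dco_ge G.hα G.h0 G.h1 G.hn k
  rw [← G.hδ] at h
  have h2 : δ * (n / (n + k + 1)) + 1 ≤ Real.exp (dco α r n k) :=
    le_trans (by linarith) (Real.add_one_le_exp _)
  have e : (n:ℝ) + k + 1 + n * δ = (n + k + 1) * (δ * (n / (n + k + 1)) + 1) := by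
    field_simp; ring
  rw [e, aco_succ]
  have ha := aco_pos α r n k
  have h3 : Real.exp (-dco α r n k) * Real.exp (dco α r n k) = 1 := by
    rw [← Real.exp_add]; simp
  have h4 := Real.exp_pos (-dco α r n k)
  calc aco α r n k * Real.exp (-dco α r n k) * ((n + k + 1) * (δ * (n / (n + k + 1)) + 1))
      = aco α r n k * (n + k + 1) * (Real.exp (-dco α r n k) * (δ * (n / (n + k + 1)) + 1)) := by ring
    _ ≤ aco α r n k * (n + k + 1) * (Real.exp (-dco α r n k) * Real.exp (dco α r n k)) := by gcongr
    _ = _ := by rw [h3, mul_one]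

lemma Good.sum_le (G : Good α r n δ ε) (N : ℕ) :
    ∑ k ∈ Finset.range N, ((k:ℝ) + 1) * aco α r n k ≤ 2 / δ ^ 2 := by
  have hn := G.npos
  have hδ0 := G.hδ0
  set M := (n:ℝ) * δ with hM
  have hMε : M * ε = 1 := G.hnδ
  have hM14 : 14 ≤ M := by
    have := G.hε1; have := G.hε0
    by_contra hc
    push Not at hc
    nlinarith
  have hnM : 14 * M ≤ n := by
    have := G.hδ1
    rw [hM]; nlinarith
  have key : ∀ N : ℕ, ∑ k ∈ Finset.range N, ((k:ℝ) + 1) * aco α r n k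
      + ((n:ℝ) + N + M) * (((N:ℝ) + 1) / (M - 2) + n / ((M - 1) * (M - 2))) * aco α r n N
      ≤ (n + M) * (1 / (M - 2) + n / ((M - 1) * (M - 2))) := by
    intro N
    induction N with
    | zero => simp [aco_zero]
    | succ k ih =>
      rw [Finset.sum_range_succ]
      have hs := G.step k
      rw [← hM] at hs
      have hc : (0:ℝ) ≤ (((k:ℝ) + 1 + 1) / (M - 2) + n / ((M - 1) * (M - 2))) := by
        have : 0 < M - 2 := by linarith
        have : 0 < M - 1 := by linarith
        positivity
      have h5 := mul_le_mul_of_nonneg_right hs hc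
      have e : (((k:ℝ) + 1)) * aco α r n k
          + aco α r n k * ((n:ℝ) + k + 1) * (((k:ℝ) + 1 + 1) / (M - 2) + n / ((M - 1) * (M - 2)))
          = ((n:ℝ) + k + M) * (((k:ℝ) + 1) / (M - 2) + n / ((M - 1) * (M - 2))) * aco α r n k := by
        have : M - 2 ≠ 0 := by linarith
        have : M - 1 ≠ 0 := by linarith
        field_simp
        ring
      push_cast
      have e3 : ((n:ℝ) + (k + 1) + M) * (((k:ℝ) + 1 + 1) / (M - 2) + n / ((M - 1) * (M - 2))) * aco α r n (k+1)
        = aco α r n (k + 1) * ((n:ℝ) + k + 1 + M) * (((k:ℝ) + 1 + 1) / (M - 2) + n / ((M - 1) * (M - 2))) := by ring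
      rw [e3]
      linarith
  have h := key N
  have hpos : 0 ≤ ((n:ℝ) + N + M) * (((N:ℝ) + 1) / (M - 2) + n / ((M - 1) * (M - 2))) * aco α r n N := by
    have : 0 < M - 2 := by linarith
    have : 0 < M - 1 := by linarith
    have := aco_pos α r n N
    positivity
  have hδM : δ = M / n := by rw [hM]; field_simp
  have hfin : (n + M) * (1 / (M - 2) + n / ((M - 1) * (M - 2))) ≤ 2 / δ ^ 2 := by
    have h2 : 0 < M - 2 := by linarith
    have h1 : 0 < M - 1 := by linarith
    have hMp : 0 < M := by linarith
    have e1 : (n + M) * (1 / (M - 2) + n / ((M - 1) * (M - 2))) = (n + M) * (n + M - 1) / ((M - 1) * (M - 2)) := by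
      field_simp; ring
    have e2 : 2 / δ ^ 2 = 2 * n ^ 2 / M ^ 2 := by rw [hδM]; field_simp
    rw [e1, e2, div_le_div_iff₀ (by positivity) (by positivity)]
    have b1 : (n + M) * (n + M - 1) ≤ (225/196) * (n:ℝ) ^ 2 := by nlinarith
    have b2 : (156/196) * M ^ 2 ≤ (M - 1) * (M - 2) := by nlinarith
    calc (n + M) * (n + M - 1) * M ^ 2 ≤ (225/196) * (n:ℝ) ^ 2 * M ^ 2 := by gcongr
      _ ≤ 2 * (n:ℝ)^2 * ((156/196) * M ^ 2) := by
        have : 0 ≤ (n:ℝ)^2 * M^2 := by positivity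
        nlinarith
      _ ≤ _ := by gcongr
  linarith

lemma Good.summable1 (G : Good α r n δ ε) : Summable fun k : ℕ => ((k:ℝ) + 1) * aco α r n k :=
  summable_of_sum_range_le (fun k => by have := aco_pos α r n k; positivity) G.sum_le

lemma Good.tsum_le (G : Good α r n δ ε) : ∑' k : ℕ, ((k:ℝ) + 1) * aco α r n k ≤ 2 / δ ^ 2 :=
  Real.tsum_le_of_sum_range_le (fun k => by have := aco_pos α r n k; positivity) G.sum_le

lemma Good.summable (G : Good α r n δ ε) : Summable fun k : ℕ => aco α r n k := by
  refine Summable.of_nonneg_of_le (fun k => (aco_pos α r n k).le) (fun k => ?_) G.summable1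
  have := aco_pos α r n k
  have : (0:ℝ) ≤ k := Nat.cast_nonneg k
  nlinarith

noncomputable def zpt (δ t : ℝ) : ℂ := (δ : ℂ) - t * Complex.I

noncomputable def Asum (α r : ℝ) (n : ℕ) (t : ℝ) : ℂ :=
  ∑' k : ℕ, (aco α r n k : ℂ) * Complex.exp (t * Complex.I) ^ k

lemma norm_expI (t : ℝ) : ‖Complex.exp (t * Complex.I)‖ = 1 := Complex.norm_exp_ofReal_mul_I t

lemma Good.Asum_est (G : Good α r n δ ε) (t : ℝ) :
    ‖(1 - Complex.exp (-(zpt δ t))) * Asum α r n t - 1‖ ≤ 2 * ε := by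
  have hn := G.npos
  have hδ0 := G.hδ0
  set w := Complex.exp (t * Complex.I) with hw
  have hw1 : ‖w‖ = 1 := norm_expI t
  have hez : Complex.exp (-(zpt δ t)) = (Real.exp (-δ) : ℂ) * w := by
    rw [zpt, hw, Complex.ofReal_exp, ← Complex.exp_add]; congr 1; push_cast; ring
  have hS : Summable fun k : ℕ => (aco α r n k : ℂ) * w ^ k := by
    apply Summable.of_norm
    simpa [hw1, abs_of_pos (aco_pos α r n _)] using G.summable
  have h1 : Asum α r n t = 1 + ∑' k : ℕ, (aco α r n (k+1) : ℂ) * w ^ (k+1) := by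
    rw [Asum, hS.tsum_eq_zero_add]; simp [aco_zero]
  have hS1 : Summable fun k : ℕ => (aco α r n (k+1) : ℂ) * w ^ (k+1) := (summable_nat_add_iff 1).2 hS
  have h2 : Complex.exp (-(zpt δ t)) * Asum α r n t
      = ∑' k : ℕ, ((Real.exp (-δ) * aco α r n k : ℝ) : ℂ) * w ^ (k+1) := by
    rw [hez, Asum, ← tsum_mul_left]
    congr 1; ext k; push_cast; rw [pow_succ]; ring
  have hS2 : Summable fun k : ℕ => ((Real.exp (-δ) * aco α r n k : ℝ) : ℂ) * w ^ (k+1) := by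
    apply Summable.of_norm
    refine (G.summable.mul_left (Real.exp (-δ))).congr (fun k => ?_)
    rw [norm_mul, norm_pow, hw1, one_pow, mul_one, Complex.norm_real, Real.norm_of_nonneg]
    have := aco_pos α r n k
    positivity
  have h3 : (1 - Complex.exp (-(zpt δ t))) * Asum α r n t - 1
      = ∑' k : ℕ, (((aco α r n (k+1) - Real.exp (-δ) * aco α r n k : ℝ) : ℂ) * w ^ (k+1)) := by
    rw [sub_mul, one_mul, h2, h1, sub_sub, add_comm _ (1:ℂ), add_sub_add_left_eq_sub, ← hS1.tsum_sub hS2]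
    congr 1; ext k; push_cast; ring
  have hb : ∀ k : ℕ, ‖((aco α r n (k+1) - Real.exp (-δ) * aco α r n k : ℝ) : ℂ) * w ^ (k+1)‖
      ≤ (δ / n) * (((k:ℝ) + 1) * aco α r n k) := by
    intro k
    have ha := aco_pos α r n k
    rw [norm_mul, norm_pow, hw1, one_pow, mul_one, Complex.norm_real, aco_succ]
    have hd1 := dco_le G.hα G.h0 G.h1 G.hn k
    have hd2 := dco_ge G.hα G.h0 G.h1 G.hn k
    rw [← G.hδ] at hd1 hd2
    set d := dco α r n k
    have hy : (0:ℝ) < n + k + 1 := by positivity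
    have hd0 : 0 ≤ d := le_trans (by positivity) hd2
    have e1 : aco α r n k * Real.exp (-d) - Real.exp (-δ) * aco α r n k
        = aco α r n k * (Real.exp (-d) - Real.exp (-δ)) := by ring
    have hm : Real.exp (-δ) ≤ Real.exp (-d) := Real.exp_le_exp.2 (by linarith)
    have hu : Real.exp (-d) - Real.exp (-δ) ≤ δ - d := by
      have h4 := Real.add_one_le_exp (-(δ - d))
      have h5 : Real.exp (-δ) = Real.exp (-d) * Real.exp (-(δ - d)) := by
        rw [← Real.exp_add]; congr 1; ring
      have h6 : Real.exp (-d) ≤ 1 := Real.exp_le_one_iff.2 (by linarith)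
      have h7 := Real.exp_pos (-d)
      rw [h5]; nlinarith
    have hv : δ - d ≤ (δ / n) * (k + 1) := by
      have : δ - δ * (n / (n + k + 1)) = δ * ((k+1) / (n + k + 1)) := by field_simp; ring
      have h8 : δ * ((k+1) / (n + k + 1)) ≤ δ * ((k+1) / n) := by
        gcongr
        have : (0:ℝ) ≤ k := Nat.cast_nonneg k
        linarith
      have h9 : δ * (((k:ℝ)+1) / n) = (δ / n) * (k + 1) := by ring
      linarith
    rw [e1, Real.norm_of_nonneg (mul_nonneg ha.le (by linarith))]
    calc aco α r n k * (Real.exp (-d) - Real.exp (-δ)) ≤ aco α r n k * ((δ / n) * (k + 1)) := by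
          gcongr; linarith
      _ = _ := by ring
  rw [h3]
  refine (tsum_of_norm_bounded ((G.summable1.mul_left (δ / n)).hasSum) hb).trans ?_
  rw [tsum_mul_left]
  calc δ / n * ∑' k : ℕ, (((k:ℝ) + 1) * aco α r n k) ≤ δ / n * (2 / δ ^ 2) := by
        gcongr; exact G.tsum_le
    _ = 2 / (n * δ) := by field_simp
    _ = 2 * ε := by
        have := G.hnδ
        rw [div_eq_iff (by positivity)]; linarith

lemma Good.one_sub_exp (G : Good α r n δ ε) {t : ℝ} (ht : |t| ≤ π) :
    ‖zpt δ t‖ / 2 ≤ ‖1 - Complex.exp (-(zpt δ t))‖ := by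
  have hδ0 := G.hδ0
  have hδ1 := G.hδ1
  have hez : Complex.exp (-(zpt δ t)) = (Real.exp (-δ) : ℂ) * Complex.exp (t * Complex.I) := by
    rw [zpt, Complex.ofReal_exp, ← Complex.exp_add]; congr 1; push_cast; ring
  have hz2 : ‖zpt δ t‖ ^ 2 = δ ^ 2 + t ^ 2 := by
    rw [← Complex.normSq_eq_norm_sq, Complex.normSq_apply, zpt]; simp; ring
  have he2 : ‖1 - Complex.exp (-(zpt δ t))‖ ^ 2
      = (1 - Real.exp (-δ)) ^ 2 + 2 * Real.exp (-δ) * (1 - Real.cos t) := by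
    rw [← Complex.normSq_eq_norm_sq, Complex.normSq_apply, hez, Complex.exp_mul_I]
    simp only [Complex.sub_re, Complex.sub_im, Complex.mul_re, Complex.mul_im, Complex.ofReal_re,
      Complex.ofReal_im, Complex.add_re, Complex.add_im, Complex.cos_ofReal_re, Complex.sin_ofReal_re,
      Complex.cos_ofReal_im, Complex.sin_ofReal_im, Complex.I_re, Complex.I_im, Complex.one_re, Complex.one_im]
    have := Real.sin_sq_add_cos_sq t
    linear_combination (Real.exp (-δ)) ^ 2 * this
  have hc := Real.cos_le_one_sub_mul_cos_sq ht
  have hl : 1 - δ ≤ Real.exp (-δ) := by have := Real.add_one_le_exp (-δ); linarith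
  have hl2 : Real.exp (-δ) * (1 + δ) ≤ 1 := by
    have h1 := Real.add_one_le_exp δ
    have h2 : Real.exp (-δ) * Real.exp δ = 1 := by rw [← Real.exp_add]; simp
    have h3 := Real.exp_pos (-δ)
    nlinarith
  have hπ : π ^ 2 ≤ 10 := by
    have := Real.pi_lt_d2; have := Real.pi_pos; nlinarith
  have h10 : (1:ℝ)/5 ≤ 2 / π ^ 2 := by
    rw [div_le_div_iff₀ (by norm_num) (by positivity)]; linarith
  apply le_of_sq_le_sq _ (norm_nonneg _)
  rw [div_pow, hz2, he2]
  have h11 : δ / 2 ≤ 1 - Real.exp (-δ) := by nlinarith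
  have h12 : (δ / 2) ^ 2 ≤ (1 - Real.exp (-δ)) ^ 2 := by gcongr
  have h13 : (1/5) * t ^ 2 ≤ 1 - Real.cos t := by nlinarith [sq_nonneg t]
  have h14 : 2 * (13/14) * ((1/5) * t ^ 2) ≤ 2 * Real.exp (-δ) * (1 - Real.cos t) := by
    gcongr; linarith
  nlinarith [sq_nonneg t]

lemma zpt_re_ge (δ t : ℝ) : |δ| ≤ ‖zpt δ t‖ := by
  have := Complex.abs_re_le_norm (zpt δ t)
  simpa [zpt] using this

lemma Good.Asum_approx (G : Good α r n δ ε) {t : ℝ} (ht : |t| ≤ π) :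
    ‖Asum α r n t - (zpt δ t)⁻¹‖ ≤ 6 + 4 * ε * ‖(zpt δ t)⁻¹‖ := by
  have hδ0 := G.hδ0
  have h1 := G.Asum_est t
  have h2 := G.one_sub_exp ht
  have hz : 0 < ‖zpt δ t‖ := lt_of_lt_of_le (by rw [abs_of_pos hδ0]; exact hδ0) (zpt_re_ge δ t)
  have hre : (zpt δ t).re = δ := by simp [zpt]
  set z := zpt δ t
  set A := Asum α r n t
  have hD : 0 < ‖1 - Complex.exp (-z)‖ := by linarith
  have hD0 : 1 - Complex.exp (-z) ≠ 0 := norm_pos_iff.1 hD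
  have hz0 : z ≠ 0 := norm_pos_iff.1 hz
  have e : A - z⁻¹ = ((1 - Complex.exp (-z)) * A - 1) / (1 - Complex.exp (-z))
      + (z - 1 + Complex.exp (-z)) / (z * (1 - Complex.exp (-z))) := by
    field_simp; ring
  have h3 : ‖z - 1 + Complex.exp (-z)‖ ≤ 3 * ‖z‖ ^ 2 := by
    by_cases hc : ‖z‖ ≤ 1
    · have := Complex.norm_exp_sub_one_sub_id_le (x := -z) (by simpa using hc)
      rw [norm_neg] at this
      have e2 : Complex.exp (-z) - 1 - -z = z - 1 + Complex.exp (-z) := by ring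
      rw [e2] at this
      nlinarith [sq_nonneg ‖z‖]
    · push Not at hc
      have h4 : ‖Complex.exp (-z)‖ ≤ 1 := by
        rw [Complex.norm_exp]; simp [hre, hδ0.le]
      have h5 : ‖z - 1 + Complex.exp (-z)‖ ≤ ‖z‖ + 1 + 1 := by
        refine (norm_add_le _ _).trans (add_le_add ((norm_sub_le _ _).trans ?_) h4)
        simp
      nlinarith
  rw [e]
  refine (norm_add_le _ _).trans ?_
  rw [norm_div, norm_div, norm_mul, add_comm (6:ℝ)]
  apply add_le_add
  · rw [div_le_iff₀ hD, norm_inv]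
    calc ‖(1 - Complex.exp (-z)) * A - 1‖ ≤ 2 * ε := h1
      _ = 4 * ε * ‖z‖⁻¹ * (‖z‖ / 2) := by field_simp; ring
      _ ≤ _ := by
        have := G.hε0
        gcongr
  · rw [div_le_iff₀ (by positivity)]
    nlinarith

end

/-! ### Part C : Fourier coefficients -/

lemma C_int_cos (m : ℤ) (hm : m ≠ 0) : ∫ t in (-π)..π, Real.cos (m * t) = 0 := by
  have hm' : (m:ℝ) ≠ 0 := by exact_mod_cast hm
  rw [intervalIntegral.integral_comp_mul_left (fun x => Real.cos x) hm', integral_cos]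
  simp [Real.sin_int_mul_pi]

lemma C_int_sin (m : ℤ) : ∫ t in (-π)..π, Real.sin (m * t) = 0 := by
  by_cases hm : m = 0
  · simp [hm]
  have hm' : (m:ℝ) ≠ 0 := by exact_mod_cast hm
  rw [intervalIntegral.integral_comp_mul_left (fun x => Real.sin x) hm', integral_sin]
  simp

lemma C_cc (i j : ℕ) : ∫ t in (-π)..π, Real.cos ((i + 1 : ℝ) * t) * Real.cos ((j:ℝ) * t)
    = if i + 1 = j then π else 0 := by
  have e : ∀ t : ℝ, Real.cos ((i + 1 : ℝ) * t) * Real.cos ((j:ℝ) * t)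
      = (1/2) * (Real.cos (((i + 1 - j : ℤ) : ℝ) * t) + Real.cos (((i + 1 + j : ℤ) : ℝ) * t)) := by
    intro t
    push_cast
    rw [show ((i:ℝ) + 1 - j) * t = (i + 1) * t - j * t by ring,
      show ((i:ℝ) + 1 + j) * t = (i + 1) * t + j * t by ring, Real.cos_sub, Real.cos_add]
    ring
  simp_rw [e]
  rw [intervalIntegral.integral_const_mul, intervalIntegral.integral_add
    (by apply Continuous.intervalIntegrable; fun_prop) (by apply Continuous.intervalIntegrable; fun_prop),
    C_int_cos (i + 1 + j) (by positivity)]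
  split_ifs with h
  · have : (i + 1 - j : ℤ) = 0 := by omega
    rw [this]; simp; ring
  · rw [C_int_cos _ (by omega)]; simp

lemma C_ss (i j : ℕ) : ∫ t in (-π)..π, Real.sin ((i + 1 : ℝ) * t) * Real.sin ((j:ℝ) * t)
    = if i + 1 = j then π else 0 := by
  have e : ∀ t : ℝ, Real.sin ((i + 1 : ℝ) * t) * Real.sin ((j:ℝ) * t)
      = (1/2) * (Real.cos (((i + 1 - j : ℤ) : ℝ) * t) - Real.cos (((i + 1 + j : ℤ) : ℝ) * t)) := by
    intro t
    push_cast
    rw [show ((i:ℝ) + 1 - j) * t = (i + 1) * t - j * t by ring,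
      show ((i:ℝ) + 1 + j) * t = (i + 1) * t + j * t by ring, Real.cos_sub, Real.cos_add]
    ring
  simp_rw [e]
  rw [intervalIntegral.integral_const_mul, intervalIntegral.integral_sub
    (by apply Continuous.intervalIntegrable; fun_prop) (by apply Continuous.intervalIntegrable; fun_prop),
    C_int_cos (i + 1 + j) (by positivity)]
  split_ifs with h
  · have : (i + 1 - j : ℤ) = 0 := by omega
    rw [this]; simp; ring
  · rw [C_int_cos _ (by omega)]; simp

lemma C_sc' (i j : ℤ) : ∫ t in (-π)..π, Real.sin ((i : ℝ) * t) * Real.cos ((j:ℝ) * t) = 0 := by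
  have e : ∀ t : ℝ, Real.sin ((i : ℝ) * t) * Real.cos ((j:ℝ) * t)
      = (1/2) * (Real.sin (((i - j : ℤ) : ℝ) * t) + Real.sin (((i + j : ℤ) : ℝ) * t)) := by
    intro t
    push_cast
    rw [sub_mul, add_mul, Real.sin_sub, Real.sin_add]
    ring
  simp_rw [e]
  rw [intervalIntegral.integral_const_mul, intervalIntegral.integral_add
    (by apply Continuous.intervalIntegrable; fun_prop) (by apply Continuous.intervalIntegrable; fun_prop),
    C_int_sin, C_int_sin]
  simp

lemma C_sc (i j : ℕ) : ∫ t in (-π)..π, Real.sin ((i + 1 : ℝ) * t) * Real.cos ((j:ℝ) * t) = 0 := by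
  have := C_sc' (i + 1) j
  push_cast at this
  exact this

lemma C_cs (i j : ℕ) : ∫ t in (-π)..π, Real.cos ((i + 1 : ℝ) * t) * Real.sin ((j:ℝ) * t) = 0 := by
  have := C_sc' j (i + 1)
  push_cast at this
  rw [← this]
  congr 1; ext t; ring

lemma C_c1 (j : ℕ) : ∫ t in (-π)..π, Real.cos ((j + 1 : ℝ) * t) = 0 := by
  have := C_int_cos (j + 1) (by positivity)
  push_cast at this
  exact this

/-- integration of an absolutely convergent trigonometric series against a bounded test function -/
lemma C_series {u v : ℕ → ℝ} (hu : Summable fun k => |u k|) (hv : Summable fun k => |v k|)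
    {a : ℝ} {f : ℝ → ℝ}
    (hf : ∀ x, f x = a / 2 + ∑' k : ℕ, (u k * Real.cos ((k + 1 : ℝ) * x) + v k * Real.sin ((k + 1 : ℝ) * x)))
    {w : ℝ → ℝ} (hw : Continuous w) (hw1 : ∀ t, |w t| ≤ 1) :
    ∫ t in (-π)..π, f t * w t = a / 2 * (∫ t in (-π)..π, w t)
      + ∑' k : ℕ, (u k * (∫ t in (-π)..π, Real.cos ((k + 1 : ℝ) * t) * w t)
        + v k * (∫ t in (-π)..π, Real.sin ((k + 1 : ℝ) * t) * w t)) := by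
  have hb : ∀ k t, |u k * Real.cos ((k + 1 : ℝ) * t) + v k * Real.sin ((k + 1 : ℝ) * t)| ≤ |u k| + |v k| := by
    intro k t
    refine (abs_add_le _ _).trans ?_
    rw [abs_mul, abs_mul]
    have := Real.abs_cos_le_one ((k + 1 : ℝ) * t)
    have := Real.abs_sin_le_one ((k + 1 : ℝ) * t)
    have := abs_nonneg (u k); have := abs_nonneg (v k)
    nlinarith
  have hs := hu.add hv
  have H := intervalIntegral.hasSum_integral_of_dominated_convergence (μ := volume) (a := -π) (b := π)
    (F := fun (k:ℕ) t => (u k * Real.cos ((k + 1 : ℝ) * t) + v k * Real.sin ((k + 1 : ℝ) * t)) * w t)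
    (f := fun t => (∑' k : ℕ, (u k * Real.cos ((k + 1 : ℝ) * t) + v k * Real.sin ((k + 1 : ℝ) * t))) * w t)
    (fun k _ => |u k| + |v k|)
    (fun k => by apply Continuous.aestronglyMeasurable; fun_prop)
    (fun k => by
      refine Eventually.of_forall (fun t _ => ?_)
      rw [Real.norm_eq_abs, abs_mul]
      have := hb k t; have := hw1 t
      have := abs_nonneg (u k * Real.cos ((k + 1 : ℝ) * t) + v k * Real.sin ((k + 1 : ℝ) * t))
      nlinarith [abs_nonneg (w t)])
    (Eventually.of_forall (fun t _ => hs))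
    (by simp)
    (Eventually.of_forall (fun t _ => by
      apply HasSum.mul_right
      exact (Summable.of_norm_bounded hs (fun k => hb k t)).hasSum))
  have hI : ∀ k : ℕ, ∫ t in (-π)..π, (u k * Real.cos ((k + 1 : ℝ) * t) + v k * Real.sin ((k + 1 : ℝ) * t)) * w t
      = (u k * (∫ t in (-π)..π, Real.cos ((k + 1 : ℝ) * t) * w t)
        + v k * (∫ t in (-π)..π, Real.sin ((k + 1 : ℝ) * t) * w t)) := by
    intro k
    rw [← intervalIntegral.integral_const_mul, ← intervalIntegral.integral_const_mul,
      ← intervalIntegral.integral_add (by apply Continuous.intervalIntegrable; fun_prop)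
      (by apply Continuous.intervalIntegrable; fun_prop)]
    congr 1; ext t; ring
  simp_rw [hI] at H
  rw [H.tsum_eq]
  have hc : Continuous fun t => ∑' k : ℕ, (u k * Real.cos ((k + 1 : ℝ) * t) + v k * Real.sin ((k + 1 : ℝ) * t)) :=
    continuous_tsum (fun k => by fun_prop) hs (fun k t => hb k t)
  rw [← intervalIntegral.integral_const_mul, ← intervalIntegral.integral_add
    (by apply Continuous.intervalIntegrable; fun_prop) (by apply Continuous.intervalIntegrable; fun_prop)]
  congr 1; ext t
  rw [hf]; ring

lemma C_A0 {u v : ℕ → ℝ} (hu : Summable fun k => |u k|) (hv : Summable fun k => |v k|)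
    {a : ℝ} {f : ℝ → ℝ}
    (hf : ∀ x, f x = a / 2 + ∑' k : ℕ, (u k * Real.cos ((k + 1 : ℝ) * x) + v k * Real.sin ((k + 1 : ℝ) * x)))
    : fourierCoefA f 0 = a := by
  rw [fourierCoefA]
  rw [C_series hu hv hf (w := fun t => Real.cos (((0:ℕ):ℝ) * t)) (by fun_prop) (fun t => Real.abs_cos_le_one _)]
  simp_rw [C_sc, C_cc]
  simp
  field_simp
  ring

lemma C_A {u v : ℕ → ℝ} (hu : Summable fun k => |u k|) (hv : Summable fun k => |v k|)
    {a : ℝ} {f : ℝ → ℝ}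
    (hf : ∀ x, f x = a / 2 + ∑' k : ℕ, (u k * Real.cos ((k + 1 : ℝ) * x) + v k * Real.sin ((k + 1 : ℝ) * x)))
    (j : ℕ) : fourierCoefA f (j + 1) = u j := by
  rw [fourierCoefA]
  rw [C_series hu hv hf (w := fun t => Real.cos (((j+1:ℕ):ℝ) * t)) (by fun_prop) (fun t => Real.abs_cos_le_one _)]
  simp_rw [C_sc, C_cc]
  push_cast
  rw [C_c1, tsum_eq_single j]
  · simp; field_simp
  · intro k hk; simp [hk]

lemma C_B {u v : ℕ → ℝ} (hu : Summable fun k => |u k|) (hv : Summable fun k => |v k|)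
    {a : ℝ} {f : ℝ → ℝ}
    (hf : ∀ x, f x = a / 2 + ∑' k : ℕ, (u k * Real.cos ((k + 1 : ℝ) * x) + v k * Real.sin ((k + 1 : ℝ) * x)))
    (j : ℕ) : fourierCoefB f (j + 1) = v j := by
  rw [fourierCoefB]
  rw [C_series hu hv hf (w := fun t => Real.sin (((j+1:ℕ):ℝ) * t)) (by fun_prop) (fun t => Real.abs_sin_le_one _)]
  simp_rw [C_ss, C_cs]
  have := C_int_sin (j + 1)
  push_cast at this ⊢
  rw [this, tsum_eq_single j]
  · simp; field_simp
  · intro k hk; simp [hk]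

lemma C_sub {u v : ℕ → ℝ} (hu : Summable fun k => |u k|) (hv : Summable fun k => |v k|)
    {a : ℝ} {f : ℝ → ℝ}
    (hf : ∀ x, f x = a / 2 + ∑' k : ℕ, (u k * Real.cos ((k + 1 : ℝ) * x) + v k * Real.sin ((k + 1 : ℝ) * x)))
    (N : ℕ) (x : ℝ) : f x - fourierSum N f x
    = ∑' k : ℕ, (u (k + N) * Real.cos ((((k + N : ℕ) : ℝ) + 1) * x) + v (k + N) * Real.sin ((((k + N : ℕ) : ℝ) + 1) * x)) := by
  have hs : Summable fun k : ℕ => (u k * Real.cos ((k + 1 : ℝ) * x) + v k * Real.sin ((k + 1 : ℝ) * x)) := by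
    refine Summable.of_norm_bounded (hu.add hv) (fun k => ?_)
    refine (abs_add_le _ _).trans ?_
    rw [abs_mul, abs_mul]
    have := Real.abs_cos_le_one ((k + 1 : ℝ) * x)
    have := Real.abs_sin_le_one ((k + 1 : ℝ) * x)
    have := abs_nonneg (u k); have := abs_nonneg (v k)
    nlinarith
  have h := hs.sum_add_tsum_nat_add N
  have e : fourierSum N f x = a / 2 + ∑ k ∈ Finset.range N, (u k * Real.cos ((k + 1 : ℝ) * x) + v k * Real.sin ((k + 1 : ℝ) * x)) := by
    rw [fourierSum, C_A0 hu hv hf]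
    congr 1
    rw [Finset.range_eq_Ico, ← Finset.Ico_add_one_right_eq_Icc, Finset.sum_Ico_eq_sum_range, Finset.sum_Ico_eq_sum_range]
    simp only [Nat.add_sub_cancel, Nat.sub_zero, Nat.zero_add]
    apply Finset.sum_congr rfl
    intro k _
    rw [add_comm 1 k, C_A hu hv hf, C_B hu hv hf]
    push_cast
    ring
  rw [e, hf x, ← h]
  ring

/-- integral of a cosine series kernel against an integrable function -/
lemma C_conv {c : ℕ → ℝ} (hc : Summable fun k => |c k|) (ν : ℕ → ℝ) (b x : ℝ) {φ : ℝ → ℝ}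
    (hφ : Integrable φ (volume.restrict (Set.Ioc (-π) π))) :
    ∫ t in (-π)..π, (∑' k : ℕ, c k * Real.cos (ν k * (x - t) - b)) * φ t
     = ∑' k : ℕ, ((c k * ∫ t in (-π)..π, Real.cos (ν k * t + b) * φ t) * Real.cos (ν k * x)
        + (c k * ∫ t in (-π)..π, Real.sin (ν k * t + b) * φ t) * Real.sin (ν k * x)) := by
  have hle : (-π) ≤ π := by linarith [Real.pi_pos]
  have hcos : ∀ (w : ℝ → ℝ), Continuous w → (∀ t, |w t| ≤ 1) →
      Integrable (fun t => w t * φ t) (volume.restrict (Set.Ioc (-π) π)) := by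
    intro w hw hw1
    exact hφ.bdd_mul (c := 1) hw.aestronglyMeasurable (Eventually.of_forall hw1)
  have H := hasSum_integral_of_summable_integral_norm (μ := volume.restrict (Set.Ioc (-π) π))
    (F := fun k t => c k * Real.cos (ν k * (x - t) - b) * φ t) (fun k => by
      simp_rw [mul_assoc]
      apply Integrable.const_mul
      exact hcos _ (by fun_prop) (fun t => Real.abs_cos_le_one _)) (by
      refine Summable.of_nonneg_of_le (fun k => integral_nonneg (fun t => norm_nonneg _)) (fun k => ?_)
        (hc.mul_right (∫ t in (Set.Ioc (-π) π), ‖φ t‖))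
      rw [← integral_const_mul]
      apply integral_mono_of_nonneg (Eventually.of_forall (fun t => norm_nonneg _)) (hφ.norm.const_mul _)
      refine Eventually.of_forall (fun t => ?_)
      simp only [norm_mul, Real.norm_eq_abs]
      have := Real.abs_cos_le_one (ν k * (x - t) - b)
      have h2 : |c k| * |Real.cos (ν k * (x - t) - b)| ≤ |c k| := by
        nlinarith [abs_nonneg (c k)]
      exact mul_le_mul_of_nonneg_right h2 (abs_nonneg _))
  simp_rw [tsum_mul_right] at H
  rw [intervalIntegral.integral_of_le hle, ← H.tsum_eq]
  congr 1; ext k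
  rw [intervalIntegral.integral_of_le hle, intervalIntegral.integral_of_le hle]
  have e : ∀ t, c k * Real.cos (ν k * (x - t) - b) * φ t
     = (c k * Real.cos (ν k * x)) * (Real.cos (ν k * t + b) * φ t)
      + (c k * Real.sin (ν k * x)) * (Real.sin (ν k * t + b) * φ t) := by
    intro t
    rw [show ν k * (x - t) - b = ν k * x - (ν k * t + b) by ring, Real.cos_sub]; ring
  simp_rw [e]
  rw [integral_add ((hcos _ (by fun_prop) (fun t => Real.abs_cos_le_one _)).const_mul _)
    ((hcos _ (by fun_prop) (fun t => Real.abs_sin_le_one _)).const_mul _), integral_const_mul, integral_const_mul]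
  ring

noncomputable def mco (α r : ℝ) (k : ℕ) : ℝ := Real.exp (-α * ((k : ℝ) + 1) ^ r)

/-- The tail of the kernel. -/
noncomputable def Ptail (α r β : ℝ) (N : ℕ) (t : ℝ) : ℝ :=
  ∑' k : ℕ, mco α r (k + N) * Real.cos ((((k + N : ℕ) : ℝ) + 1) * t - β * π / 2)

lemma C_main {α r β : ℝ} (hm : Summable (mco α r)) {φ f : ℝ → ℝ} {a₀ : ℝ}
    (hφ : Integrable φ (volume.restrict (Set.Ioc (-π) π)))
    (hf : ∀ x, f x = a₀ / 2 + (1 / π) * ∫ t in (-π)..π, genPoissonKernel α r β (x - t) * φ t)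
    (N : ℕ) (x : ℝ) :
    f x - fourierSum N f x = (1 / π) * ∫ t in (-π)..π, Ptail α r β N (x - t) * φ t := by
  have hmp : ∀ k, 0 < mco α r k := fun k => Real.exp_pos _
  have habs : Summable fun k => |mco α r k| := by
    simpa only [abs_of_pos (hmp _)] using hm
  have hle : (-π) ≤ π := by linarith [Real.pi_pos]
  set u : ℕ → ℝ := fun k => (1 / π) * (mco α r k * ∫ t in (-π)..π, Real.cos (((k:ℝ) + 1) * t + β * π / 2) * φ t) with hu
  set v : ℕ → ℝ := fun k => (1 / π) * (mco α r k * ∫ t in (-π)..π, Real.sin (((k:ℝ) + 1) * t + β * π / 2) * φ t) with hv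
  have hint : ∀ (w : ℝ → ℝ), Continuous w → (∀ t, |w t| ≤ 1) →
      |∫ t in (-π)..π, w t * φ t| ≤ ∫ t in (Set.Ioc (-π) π), ‖φ t‖ := by
    intro w hw hw1
    rw [intervalIntegral.integral_of_le hle, ← Real.norm_eq_abs]
    apply norm_integral_le_of_norm_le hφ.norm
    refine Eventually.of_forall (fun t => ?_)
    rw [norm_mul, Real.norm_eq_abs (w t)]
    nlinarith [hw1 t, norm_nonneg (φ t)]
  have hsum : ∀ I : ℕ → ℝ, (∀ k, |I k| ≤ ∫ t in (Set.Ioc (-π) π), ‖φ t‖) →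
      Summable fun k => |(1 / π) * (mco α r k * I k)| := by
    intro I hI
    refine Summable.of_nonneg_of_le (fun k => abs_nonneg _) (fun k => ?_)
      ((habs.mul_right (∫ t in (Set.Ioc (-π) π), ‖φ t‖)).mul_left (1 / π))
    rw [abs_mul, abs_mul, abs_of_pos (show 0 < 1 / π by positivity)]
    have := hI k
    gcongr
  have hus : Summable fun k => |u k| := hsum _ (fun k => hint _ (by fun_prop) (fun t => Real.abs_cos_le_one _))
  have hvs : Summable fun k => |v k| := hsum _ (fun k => hint _ (by fun_prop) (fun t => Real.abs_sin_le_one _))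
  have hf' : ∀ x, f x = a₀ / 2 + ∑' k : ℕ, (u k * Real.cos ((k + 1 : ℝ) * x) + v k * Real.sin ((k + 1 : ℝ) * x)) := by
    intro x
    rw [hf x]
    congr 1
    have := C_conv habs (fun k => (k:ℝ) + 1) (β * π / 2) x hφ
    unfold genPoissonKernel
    simp only [mco] at this hu hv
    rw [this, ← tsum_mul_left]
    congr 1; ext k
    simp only [hu, hv]
    ring
  rw [C_sub hus hvs hf']
  have habs' : Summable fun k => |mco α r (k + N)| := (summable_nat_add_iff N).2 habs
  have := C_conv habs' (fun k => (((k + N : ℕ) : ℝ) + 1)) (β * π / 2) x hφ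
  unfold Ptail
  rw [this, ← tsum_mul_left]
  congr 1; ext k
  simp only [hu, hv]
  ring

/-! ### Part B : complete monotonicity, and the zero set of the kernel is null -/

def CMn : ℕ → (ℝ → ℝ) → Prop
  | 0, f => ∀ x > 0, 0 ≤ f x
  | (n + 1), f => (∀ x > 0, 0 ≤ f x) ∧ ∃ f' : ℝ → ℝ, (∀ x > 0, HasDerivAt f (-f' x) x) ∧ CMn n f'

lemma CMn.nonneg {n : ℕ} {f : ℝ → ℝ} (h : CMn n f) : ∀ x > 0, 0 ≤ f x := by
  cases n with
  | zero => exact h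
  | succ n => exact h.1

lemma CMn.pred {n : ℕ} {f : ℝ → ℝ} (h : CMn (n + 1) f) : CMn n f := by
  induction n generalizing f with
  | zero => exact h.1
  | succ n ih =>
    obtain ⟨h0, f', hd, h'⟩ := h
    exact ⟨h0, f', hd, ih h'⟩

lemma CMn.add {n : ℕ} {f g : ℝ → ℝ} (hf : CMn n f) (hg : CMn n g) : CMn n (fun x => f x + g x) := by
  induction n generalizing f g with
  | zero => intro x hx; exact add_nonneg (hf x hx) (hg x hx)
  | succ n ih =>
    obtain ⟨f0, f', fd, f1⟩ := hf
    obtain ⟨g0, g', gd, g1⟩ := hg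
    refine ⟨fun x hx => add_nonneg (f0 x hx) (g0 x hx), _, fun x hx => ?_, ih f1 g1⟩
    convert! (fd x hx).add (gd x hx) using 1
    ring

lemma CMn.mul {n : ℕ} {f g : ℝ → ℝ} (hf : CMn n f) (hg : CMn n g) : CMn n (fun x => f x * g x) := by
  induction n generalizing f g with
  | zero => intro x hx; exact mul_nonneg (hf x hx) (hg x hx)
  | succ n ih =>
    have hf' := hf.pred
    have hg' := hg.pred
    obtain ⟨f0, f', fd, f1⟩ := hf
    obtain ⟨g0, g', gd, g1⟩ := hg
    refine ⟨fun x hx => mul_nonneg (f0 x hx) (g0 x hx), _, fun x hx => ?_, (ih f1 hg').add (ih hf' g1)⟩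
    convert! (fd x hx).mul (gd x hx) using 1
    ring

lemma CMn_rpow (n : ℕ) : ∀ (c s : ℝ), 0 ≤ c → 0 ≤ s → CMn n (fun x => c * x ^ (-s)) := by
  induction n with
  | zero => intro c s hc hs x hx; have := Real.rpow_pos_of_pos hx (-s); positivity
  | succ n ih =>
    intro c s hc hs
    refine ⟨fun x hx => by have := Real.rpow_pos_of_pos hx (-s); positivity, _, fun x hx => ?_,
      ih (c * s) (s + 1) (by positivity) (by positivity)⟩
    convert! (Real.hasDerivAt_rpow_const (p := -s) (Or.inl hx.ne')).const_mul c using 1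
    rw [show -s - 1 = -(s + 1) by ring]; ring

lemma CMn_exp {α r : ℝ} (hα : 0 < α) (h0 : 0 < r) (h1 : r < 1) (n : ℕ) :
    CMn n (fun x => Real.exp (-α * x ^ r)) := by
  induction n with
  | zero => intro x _; exact (Real.exp_pos _).le
  | succ n ih =>
    refine ⟨fun x _ => (Real.exp_pos _).le, _, fun x hx => ?_,
      (CMn_rpow n (α * r) (1 - r) (by positivity) (by linarith)).mul ih⟩
    convert ((Real.hasDerivAt_rpow_const (p := r) (Or.inl hx.ne')).const_mul (-α)).exp using 1
    rw [show -(1 - r) = r - 1 by ring]; ring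

lemma CMn.diff {n : ℕ} {f : ℝ → ℝ} (hf : CMn (n + 1) f) : CMn n (fun x => f x - f (x + 1)) := by
  induction n generalizing f with
  | zero =>
    obtain ⟨f0, f', fd, f1⟩ := hf
    intro x hx
    have hanti : AntitoneOn f (Set.Ioi 0) := by
      apply antitoneOn_of_deriv_nonpos (convex_Ioi 0)
      · intro y hy; exact (fd y hy).continuousAt.continuousWithinAt
      · rw [interior_Ioi]; intro y hy; exact (fd y hy).differentiableAt.differentiableWithinAt
      · rw [interior_Ioi]; intro y hy
        rw [(fd y hy).deriv]
        have := f1 y hy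
        linarith
    have := hanti (a := x) (b := x + 1) hx (show (0:ℝ) < x + 1 by have : (0:ℝ) < x := hx
                                                                  linarith) (by linarith)
    simp only
    linarith
  | succ n ih =>
    have hz : CMn 0 (fun x => f x - f (x + 1)) := by
      obtain ⟨f0, f', fd, f1⟩ := hf
      intro x hx
      have hanti : AntitoneOn f (Set.Ioi 0) := by
        apply antitoneOn_of_deriv_nonpos (convex_Ioi 0)
        · intro y hy; exact (fd y hy).continuousAt.continuousWithinAt
        · rw [interior_Ioi]; intro y hy; exact (fd y hy).differentiableAt.differentiableWithinAt
        · rw [interior_Ioi]; intro y hy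
          rw [(fd y hy).deriv]
          have := f1.nonneg y hy
          linarith
      have := hanti (a := x) (b := x + 1) hx (show (0:ℝ) < x + 1 by have : (0:ℝ) < x := hx
                                                                    linarith) (by linarith)
      simp only
      linarith
    obtain ⟨f0, f', fd, f1⟩ := hf
    refine ⟨hz, _, fun x hx => ?_, ih f1⟩
    have h2 := (fd (x + 1) (by have : (0:ℝ) < x := hx
                               linarith)).comp_add_const x 1
    convert! (fd x hx).sub h2 using 1
    ring

/-- Euler transform partial terms -/
noncomputable def Ueul (z : ℂ) : ℕ → (ℝ → ℝ) → ℝ → ℂ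
  | 0, f, x => f x
  | (N + 1), f, x => Ueul z N f x + z * Ueul z N f (x + 1)

lemma Ueul_sub (z : ℂ) (N : ℕ) (f : ℝ → ℝ) (x : ℝ) :
    Ueul z N (fun y => f y - f (y + 1)) x = Ueul z N f x - Ueul z N f (x + 1) := by
  induction N generalizing x with
  | zero => simp [Ueul]
  | succ N ih => simp only [Ueul, ih]; ring

lemma Ueul_bound {z : ℂ} {ρ : ℝ} (h1 : 1 ≤ ρ) (hz : ‖1 + z‖ ≤ ρ) (N : ℕ) :
    ∀ (f : ℝ → ℝ), CMn N f → ∀ x > 0, ‖Ueul z N f x‖ ≤ ρ ^ N * f x := by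
  induction N with
  | zero => intro f hf x hx; simp [Ueul, abs_of_nonneg (hf x hx)]
  | succ N ih =>
    intro f hf x hx
    have hx' : (0:ℝ) < x := hx
    have e : Ueul z (N + 1) f x = Ueul z N (fun y => f y - f (y + 1)) x + (1 + z) * Ueul z N f (x + 1) := by
      rw [Ueul_sub, Ueul]; ring
    rw [e]
    have b1 := ih _ hf.diff x hx
    have b2 := ih _ hf.pred (x + 1) (by linarith)
    have n1 := hf.diff.nonneg x hx
    have n2 := hf.nonneg (x + 1) (by linarith)
    beta_reduce at b1 n1
    refine (norm_add_le _ _).trans ?_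
    rw [norm_mul]
    have hρ : 0 ≤ ρ := by linarith
    calc ‖Ueul z N (fun y => f y - f (y + 1)) x‖ + ‖1 + z‖ * ‖Ueul z N f (x + 1)‖
        ≤ ρ ^ N * (f x - f (x + 1)) + ρ * (ρ ^ N * f (x + 1)) := by gcongr
      _ ≤ ρ * (ρ ^ N * (f x - f (x + 1))) + ρ * (ρ ^ N * f (x + 1)) := by
        have : 0 ≤ ρ ^ N * (f x - f (x + 1)) := by positivity
        nlinarith
      _ = ρ ^ (N + 1) * f x := by ring

lemma Ueul_closed (z : ℂ) (N : ℕ) (f : ℝ → ℝ) (x : ℝ) :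
    Ueul z N f x = ∑ j ∈ Finset.range (N + 1), (N.choose j : ℂ) * z ^ j * f (x + j) := by
  induction N generalizing x with
  | zero => simp [Ueul]
  | succ N ih =>
    rw [Ueul, ih, ih, Finset.sum_range_succ' _ (N + 1)]
    have e1 : ∑ j ∈ Finset.range (N + 1), (N.choose j : ℂ) * z ^ j * f (x + j)
        = ∑ j ∈ Finset.range (N + 1), (N.choose (j + 1) : ℂ) * z ^ (j + 1) * f (x + (j + 1 : ℕ)) + f x := by
      have := Finset.sum_range_succ' (fun j => (N.choose j : ℂ) * z ^ j * f (x + j)) (N + 1)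
      rw [Finset.sum_range_succ] at this
      simp at this
      simpa using this
    rw [e1, Finset.mul_sum, add_right_comm, ← Finset.sum_add_distrib]
    congr 1
    · apply Finset.sum_congr rfl
      intro j _
      rw [Nat.choose_succ_succ]
      push_cast
      rw [show x + 1 + (j:ℝ) = x + (j + 1) by ring]
      ring
    · simp

lemma B_diff (f : ℝ → ℝ) (N : ℕ) (x : ℝ) : Differentiable ℂ (fun z => Ueul z N f x) := by
  simp_rw [Ueul_closed]
  fun_prop

noncomputable def Geul (f : ℝ → ℝ) (z : ℂ) : ℂ := ∑' N : ℕ, (1/2 : ℂ) ^ (N + 1) * Ueul z N f 1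

lemma Geul_analytic {f : ℝ → ℝ} (hf : ∀ N, CMn N f) {z₀ : ℂ} (hz : ‖1 + z₀‖ < 2) :
    AnalyticAt ℂ (Geul f) z₀ := by
  obtain ⟨R, hR1, hR2⟩ := exists_between (max_lt (show (1:ℝ) < 2 by norm_num) hz)
  have h1R : 1 ≤ R := (le_max_left _ _).trans hR1.le
  have hzR : ‖1 + z₀‖ < R := (le_max_right _ _).trans_lt hR1
  have hopen : IsOpen {z : ℂ | ‖1 + z‖ < R} := isOpen_lt (by fun_prop) continuous_const
  have hd : DifferentiableOn ℂ (Geul f) {z : ℂ | ‖1 + z‖ < R} := by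
    unfold Geul
    refine Complex.differentiableOn_tsum_of_summable_norm (u := fun N => (1/2:ℝ) * f 1 * (R / 2) ^ N) ?_ ?_ hopen ?_
    · apply Summable.mul_left
      apply summable_geometric_of_lt_one (by positivity)
      linarith
    · intro N
      exact ((B_diff f N 1).const_mul _).differentiableOn
    · intro N z hz
      have := Ueul_bound h1R (le_of_lt hz) N f (hf N) 1 (by norm_num)
      rw [norm_mul, norm_pow]
      have e : ‖(1/2:ℂ)‖ = 1/2 := by norm_num
      rw [e]
      calc (1/2:ℝ) ^ (N + 1) * ‖Ueul z N f 1‖ ≤ (1/2:ℝ) ^ (N + 1) * (R ^ N * f 1) := by gcongr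
        _ = _ := by rw [div_pow, pow_succ, div_pow, one_pow]; field_simp; ring
  exact hd.analyticAt (hopen.mem_nhds hzR)

lemma B_choose (j : ℕ) : HasSum (fun N : ℕ => (1/2:ℝ) ^ (N + 1) * (N.choose j : ℝ)) 1 := by
  have h := hasSum_choose_mul_geometric_of_norm_lt_one (𝕜 := ℝ) j (r := 1/2) (by norm_num)
  have h2 := h.mul_left ((1/2:ℝ) ^ (j + 1))
  have e : (1/2:ℝ) ^ (j + 1) * (1 / (1 - 1 / 2) ^ (j + 1)) = 1 := by norm_num
  rw [e] at h2
  rw [← hasSum_nat_add_iff' j]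
  have e3 : ∑ i ∈ Finset.range j, (1/2:ℝ) ^ (i + 1) * (i.choose j : ℝ) = 0 := by
    apply Finset.sum_eq_zero
    intro i hi
    rw [Nat.choose_eq_zero_of_lt (Finset.mem_range.1 hi)]; simp
  rw [e3, sub_zero]
  convert! h2 using 2 with N
  rw [show N + j + 1 = (j + 1) + N by ring, pow_add]; ring

lemma Geul_eq {f : ℝ → ℝ} (hf0 : ∀ x > 0, 0 ≤ f x) (hs : Summable fun j : ℕ => f (1 + j)) {z : ℂ}
    (hz : ‖z‖ ≤ 1) : Geul f z = ∑' j : ℕ, z ^ j * f (1 + j) := by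
  have hfj : ∀ j : ℕ, 0 ≤ f (1 + j) := fun j => hf0 _ (by positivity)
  have hU : ∀ N, (1/2 : ℂ) ^ (N + 1) * Ueul z N f 1
      = ∑' j : ℕ, ((1/2:ℝ) ^ (N + 1) * (N.choose j : ℝ) : ℝ) * (z ^ j * f (1 + j)) := by
    intro N
    rw [Ueul_closed, tsum_eq_sum (s := Finset.range (N + 1)), Finset.mul_sum]
    · apply Finset.sum_congr rfl
      intro j _
      push_cast; ring
    · intro j hj
      rw [Nat.choose_eq_zero_of_lt (by simpa using hj)]; simp
  rw [Geul]
  simp_rw [hU]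
  have hsum : Summable (Function.uncurry fun (N j : ℕ) =>
      (((1/2:ℝ) ^ (N + 1) * (N.choose j : ℝ) : ℝ) : ℂ) * (z ^ j * f (1 + j))) := by
    apply Summable.of_norm
    rw [← (Equiv.prodComm ℕ ℕ).summable_iff]
    rw [summable_prod_of_nonneg (by intro x; simp only [Function.comp]; exact norm_nonneg _)]
    have hn : ∀ j N : ℕ, ‖(((1/2:ℝ) ^ (N + 1) * (N.choose j : ℝ) : ℝ) : ℂ) * (z ^ j * f (1 + j))‖
        = ((1/2:ℝ) ^ (N + 1) * (N.choose j : ℝ)) * (‖z‖ ^ j * f (1 + j)) := by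
      intro j N
      rw [norm_mul, norm_mul, Complex.norm_real, Complex.norm_real, Real.norm_of_nonneg (by positivity),
        Real.norm_of_nonneg (hfj j), norm_pow]
    constructor
    · intro j
      simp only [Function.comp_apply, Equiv.prodComm_apply, Prod.swap_prod_mk, Function.uncurry_apply_pair, hn]
      exact (B_choose j).summable.mul_right _
    · simp only [Function.comp_apply, Equiv.prodComm_apply, Prod.swap_prod_mk, Function.uncurry_apply_pair, hn]
      simp_rw [tsum_mul_right, (B_choose _).tsum_eq, one_mul]
      refine Summable.of_nonneg_of_le (fun j => mul_nonneg (by positivity) (hfj j)) (fun j => ?_) hs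
      have : ‖z‖ ^ j ≤ 1 := pow_le_one₀ (norm_nonneg _) hz
      have := hfj j
      nlinarith
  rw [← hsum.tsum_comm]
  congr 1; ext j
  rw [tsum_mul_right]
  have := Complex.hasSum_ofReal.2 (B_choose j)
  rw [this.tsum_eq]; simp

lemma B_kernel_re {α r β : ℝ} (hα : 0 < α) (h0 : 0 < r) (h1 : r < 1) (hm : Summable (mco α r)) (t : ℝ) :
    genPoissonKernel α r β t = (Complex.exp ((t - β * π / 2 : ℝ) * Complex.I)
      * Geul (fun x => Real.exp (-α * x ^ r)) (Complex.exp (t * Complex.I))).re := by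
  rw [Geul_eq (fun x _ => (Real.exp_pos _).le) (by
    refine hm.congr (fun k => ?_)
    rw [mco, add_comm]) (by rw [Complex.norm_exp_ofReal_mul_I])]
  rw [← tsum_mul_left, genPoissonKernel]
  have e : ∀ k : ℕ, Real.exp (-α * ((k : ℝ) + 1) ^ r) * Real.cos (((k : ℝ) + 1) * t - β * π / 2)
     = (Complex.exp ((t - β * π / 2 : ℝ) * Complex.I) * (Complex.exp (t * Complex.I) ^ k
        * (Real.exp (-α * (1 + k : ℝ) ^ r) : ℝ))).re := by
    intro k
    have : Complex.exp ((t - β * π / 2 : ℝ) * Complex.I) * (Complex.exp (t * Complex.I) ^ k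
        * (Real.exp (-α * (1 + k : ℝ) ^ r) : ℝ))
        = (Real.exp (-α * (1 + k : ℝ) ^ r) : ℝ) * Complex.exp ((((k:ℝ) + 1) * t - β * π / 2 : ℝ) * Complex.I) := by
      rw [← Complex.exp_nat_mul, ← mul_assoc, ← Complex.exp_add, mul_comm]
      congr 2; push_cast; ring
    rw [this, Complex.re_ofReal_mul, Complex.exp_ofReal_mul_I_re, add_comm (1:ℝ)]
  simp_rw [e]
  rw [Complex.re_tsum]
  apply Summable.of_norm
  refine hm.congr (fun k => ?_)
  rw [norm_mul, norm_mul, norm_pow, Complex.norm_exp_ofReal_mul_I, Complex.norm_exp_ofReal_mul_I, Complex.norm_real,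
    Real.norm_of_nonneg (Real.exp_pos _).le, mco, add_comm (1:ℝ)]
  simp

lemma B_analytic {α r β : ℝ} (hα : 0 < α) (h0 : 0 < r) (h1 : r < 1) (hm : Summable (mco α r)) :
    AnalyticOnNhd ℝ (genPoissonKernel α r β) (Set.Ioo 0 (2 * π)) := by
  intro t ht
  have hlt : ‖1 + Complex.exp (t * Complex.I)‖ < 2 := by
    have hc : Real.cos t < 1 := by
      refine lt_of_le_of_ne (Real.cos_le_one t) (fun h => ?_)
      have := (Real.cos_eq_one_iff_of_lt_of_lt (by linarith [ht.1, Real.pi_pos]) ht.2).1 h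
      exact ht.1.ne' this
    have h2 : ‖1 + Complex.exp (t * Complex.I)‖ ^ 2 = 2 + 2 * Real.cos t := by
      rw [← Complex.normSq_eq_norm_sq, Complex.normSq_apply, Complex.exp_mul_I]
      simp only [Complex.add_re, Complex.add_im, Complex.mul_re, Complex.mul_im,
        Complex.cos_ofReal_re, Complex.sin_ofReal_re,
        Complex.cos_ofReal_im, Complex.sin_ofReal_im, Complex.I_re, Complex.I_im, Complex.one_re, Complex.one_im]
      have := Real.sin_sq_add_cos_sq t
      linear_combination this
    nlinarith [norm_nonneg (1 + Complex.exp (t * Complex.I))]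
  have hG := Geul_analytic (CMn_exp hα h0 h1) hlt
  have hA : AnalyticAt ℂ (fun w : ℂ => Complex.exp ((w - (β * π / 2 : ℝ)) * Complex.I)
      * Geul (fun x => Real.exp (-α * x ^ r)) (Complex.exp (w * Complex.I))) (t : ℂ) := by
    apply AnalyticAt.mul
    · fun_prop
    · exact AnalyticAt.comp (g := Geul (fun x => Real.exp (-α * x ^ r))) (f := fun w : ℂ => Complex.exp (w * Complex.I)) hG (by fun_prop)
  have := hA.re_ofReal
  refine this.congr (Eventually.of_forall (fun s => ?_))
  rw [B_kernel_re hα h0 h1 hm]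
  simp

lemma B_periodic (α r β t : ℝ) : genPoissonKernel α r β (t + 2 * π) = genPoissonKernel α r β t := by
  unfold genPoissonKernel
  congr 1; ext k
  congr 1
  rw [← Real.cos_add_nat_mul_two_pi (((k:ℝ) + 1) * t - β * π / 2) (k + 1)]
  congr 1; push_cast; ring

lemma B_nonzero {α r β : ℝ} (hm : Summable (mco α r)) :
    ∃ t ∈ Set.Ioo 0 (2 * π), genPoissonKernel α r β t ≠ 0 := by
  by_contra hcon
  push Not at hcon
  have hmp : ∀ k, 0 < mco α r k := fun k => Real.exp_pos _
  have hb : ∀ w : ℝ, |w| ≤ 1 → Summable fun k => |mco α r k * w| := by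
    intro w _
    simpa only [abs_mul, abs_of_pos (hmp _)] using hm.mul_right |w|
  have hf : ∀ x, genPoissonKernel α r β x = (0:ℝ) / 2 + ∑' k : ℕ,
      (mco α r k * Real.cos (β * π / 2) * Real.cos ((k + 1 : ℝ) * x)
        + mco α r k * Real.sin (β * π / 2) * Real.sin ((k + 1 : ℝ) * x)) := by
    intro x
    rw [zero_div, zero_add, genPoissonKernel]
    congr 1; ext k
    rw [Real.cos_sub, mco]; ring
  have hA := C_A (hb _ (Real.abs_cos_le_one _)) (hb _ (Real.abs_sin_le_one _)) hf 0
  have hB := C_B (hb _ (Real.abs_cos_le_one _)) (hb _ (Real.abs_sin_le_one _)) hf 0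
  have hz : ∀ᵐ t : ℝ, t ∈ Set.uIoc (-π) π → genPoissonKernel α r β t = 0 := by
    have h3 : ∀ᵐ t : ℝ, t ∉ ({0} : Set ℝ) := measure_eq_zero_iff_ae_notMem.1 (by simp)
    filter_upwards [h3] with t ht htm
    rw [Set.uIoc_of_le (by linarith [Real.pi_pos])] at htm
    have ht0 : t ≠ 0 := by simpa using ht
    rcases lt_or_gt_of_ne ht0 with h | h
    · rw [← B_periodic]
      exact hcon _ ⟨by linarith [htm.1], by linarith⟩
    · exact hcon _ ⟨h, by linarith [htm.2, Real.pi_pos]⟩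
  have hA0 : fourierCoefA (genPoissonKernel α r β) (0 + 1) = 0 := by
    rw [fourierCoefA, intervalIntegral.integral_zero_ae, mul_zero]
    filter_upwards [hz] with t ht htm
    rw [ht htm, zero_mul]
  have hB0 : fourierCoefB (genPoissonKernel α r β) (0 + 1) = 0 := by
    rw [fourierCoefB, intervalIntegral.integral_zero_ae, mul_zero]
    filter_upwards [hz] with t ht htm
    rw [ht htm, zero_mul]
  rw [hA0] at hA
  rw [hB0] at hB
  have h1 := hmp 0
  have hc : Real.cos (β * π / 2) = 0 := by
    rcases mul_eq_zero.1 hA.symm with h | h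
    · exact absurd h h1.ne'
    · exact h
  have hs : Real.sin (β * π / 2) = 0 := by
    rcases mul_eq_zero.1 hB.symm with h | h
    · exact absurd h h1.ne'
    · exact h
  have := Real.sin_sq_add_cos_sq (β * π / 2)
  rw [hc, hs] at this
  norm_num at this

/-- The kernel vanishes only on a null set. -/
lemma B_null {α r β : ℝ} (hα : 0 < α) (h0 : 0 < r) (h1 : r < 1) (hm : Summable (mco α r)) :
    ∀ᵐ t : ℝ, genPoissonKernel α r β t ≠ 0 := by
  have hA := B_analytic (β := β) hα h0 h1 hm
  obtain ⟨t₁, ht₁, hne⟩ := B_nonzero (β := β) hm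
  have hloc : volume (Set.Ioo 0 (2 * π) ∩ {t | genPoissonKernel α r β t = 0}) = 0 := by
    apply measure_null_of_locally_null
    intro x hx
    have hd : ∀ᶠ z in nhdsWithin x {x}ᶜ, genPoissonKernel α r β z ≠ 0 := by
      by_contra hc
      rw [Filter.not_eventually] at hc
      have := hA.eqOn_zero_of_preconnected_of_frequently_eq_zero isPreconnected_Ioo hx.1
        (hc.mono (fun z hz => by simpa using hz))
      exact hne (this ht₁)
    rw [eventually_nhdsWithin_iff] at hd
    refine ⟨_, inter_mem_nhdsWithin _ hd, measure_mono_null ?_ (measure_singleton x)⟩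
    rintro y ⟨hy1, hy2⟩
    by_contra hne
    exact hy2 hne hy1.2
  have hcov : {t | ¬ genPoissonKernel α r β t ≠ 0} ⊆ ⋃ m : ℤ,
      (((fun t => t + (m:ℝ) * (2 * π)) ⁻¹' (Set.Ioo 0 (2 * π) ∩ {t | genPoissonKernel α r β t = 0})) ∪ {(m:ℝ) * (2 * π)}) := by
    intro t ht
    have ht : genPoissonKernel α r β t = 0 := by simpa using ht
    have hper : Function.Periodic (genPoissonKernel α r β) (2 * π) := B_periodic α r β
    rw [Set.mem_iUnion]
    have h2π : (0:ℝ) < 2 * π := by positivity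
    set q := ⌊t / (2 * π)⌋ with hq
    have hq1 : (q:ℝ) * (2 * π) ≤ t := by
      have := Int.floor_le (t / (2 * π)); rw [le_div_iff₀ h2π] at this; exact this
    have hq2 : t < ((q:ℝ) + 1) * (2 * π) := by
      have := Int.lt_floor_add_one (t / (2 * π)); rw [div_lt_iff₀ h2π] at this; exact this
    rcases hq1.eq_or_lt with h | h
    · exact ⟨q, Or.inr (by simp [h])⟩
    · refine ⟨-q, Or.inl ⟨⟨by push_cast; linarith, by push_cast; linarith⟩, ?_⟩⟩
      show genPoissonKernel α r β (t + ((-q : ℤ):ℝ) * (2 * π)) = 0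
      rw [← ht]
      exact hper.int_mul (-q) t
  refine measure_mono_null hcov ?_
  rw [measure_iUnion_null_iff]
  intro m
  apply measure_union_null
  · rw [measure_preimage_add_right]; exact hloc
  · simp

/-! ### Part D : the normalized kernel and its step approximation -/

noncomputable def gker (α r β : ℝ) (n : ℕ) (t : ℝ) : ℝ :=
  Real.exp (α * (n:ℝ) ^ r) * Ptail α r β (n - 1) t

noncomputable def tst (n : ℕ) (t : ℝ) : ℝ := -π + 2 * π * (⌊(n:ℝ) * (t + π) / (2 * π)⌋ : ℝ) / n

noncomputable def rho (δ t : ℝ) : ℝ := ‖(zpt δ t)⁻¹‖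

noncomputable def the (δ t : ℝ) : ℝ := Complex.arg (zpt δ t)⁻¹

noncomputable def hst (δ β : ℝ) (n : ℕ) (t : ℝ) : ℝ :=
  rho δ (tst n t) * Real.cos ((n:ℝ) * t + (the δ (tst n t) - β * π / 2))

lemma D_re (w : ℂ) (y : ℝ) : (Complex.exp (y * Complex.I) * w).re = ‖w‖ * Real.cos (y + Complex.arg w) := by
  conv_lhs => rw [← Complex.norm_mul_exp_arg_mul_I w]
  rw [show Complex.exp (y * Complex.I) * (‖w‖ * Complex.exp (Complex.arg w * Complex.I))
    = (‖w‖:ℂ) * Complex.exp ((y + Complex.arg w : ℝ) * Complex.I) by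
      push_cast; rw [add_mul, Complex.exp_add]; ring]
  rw [Complex.re_ofReal_mul, Complex.exp_ofReal_mul_I_re]

section
variable {α r β δ ε : ℝ} {n : ℕ}

lemma Good.mco_summable (G : Good α r n δ ε) : Summable (mco α r) := by
  have h := G.summable.mul_left (Real.exp (-α * (n:ℝ) ^ r))
  rw [← summable_nat_add_iff (n - 1)]
  refine h.congr fun k => ?_
  have hn : ((n - 1 : ℕ) : ℝ) + 1 = n := by
    have := G.hn
    rw [← Nat.cast_succ]; congr 1; omega
  rw [aco, mco, ← Real.exp_add]
  congr 1
  push_cast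
  rw [show (k:ℝ) + ((n - 1 : ℕ) : ℝ) + 1 = n + k by linarith]
  ring

lemma Good.gker_eq (G : Good α r n δ ε) (t : ℝ) :
    gker α r β n t = (Complex.exp (((n:ℝ) * t - β * π / 2 : ℝ) * Complex.I) * Asum α r n t).re := by
  have hn : ((n - 1 : ℕ) : ℝ) + 1 = n := by
    have := G.hn
    rw [← Nat.cast_succ]; congr 1; omega
  have hs : Summable fun k : ℕ => (aco α r n k : ℂ) * Complex.exp (t * Complex.I) ^ k := by
    apply Summable.of_norm
    refine G.summable.congr fun k => ?_
    rw [norm_mul, norm_pow, Complex.norm_exp_ofReal_mul_I, one_pow, mul_one, Complex.norm_real,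
      Real.norm_of_nonneg (aco_pos _ _ _ _).le]
  rw [Asum, ← tsum_mul_left, Complex.re_tsum (hs.mul_left _), gker, Ptail, ← tsum_mul_left]
  congr 1; ext k
  rw [show Complex.exp (((n:ℝ) * t - β * π / 2 : ℝ) * Complex.I) * ((aco α r n k : ℂ) * Complex.exp (t * Complex.I) ^ k)
    = (aco α r n k : ℂ) * Complex.exp (((n:ℝ) * t - β * π / 2 + k * t : ℝ) * Complex.I) by
      rw [← Complex.exp_nat_mul, mul_left_comm, ← Complex.exp_add]
      congr 2; push_cast; ring]
  rw [Complex.re_ofReal_mul, Complex.exp_ofReal_mul_I_re, ← mul_assoc]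
  congr 1
  · rw [aco, mco, ← Real.exp_add]
    congr 1
    push_cast
    rw [show (k:ℝ) + ((n - 1 : ℕ) : ℝ) + 1 = n + k by linarith]
    ring
  · congr 1
    push_cast
    rw [show (k:ℝ) + ((n - 1 : ℕ) : ℝ) + 1 = n + k by linarith]
    ring

lemma Good.gker_cont (G : Good α r n δ ε) : Continuous (gker α r β n) := by
  unfold gker Ptail
  apply Continuous.mul continuous_const
  have hm := G.mco_summable
  refine continuous_tsum (u := fun k => mco α r (k + (n - 1))) (fun k => by fun_prop) ?_ ?_
  · exact (summable_nat_add_iff (n - 1)).2 hm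
  · intro k t
    have : 0 < mco α r (k + (n - 1)) := Real.exp_pos _
    rw [norm_mul, Real.norm_of_nonneg this.le, Real.norm_eq_abs]
    exact mul_le_of_le_one_right this.le (Real.abs_cos_le_one _)

lemma gker_periodic : Function.Periodic (gker α r β n) (2 * π) := by
  intro t
  unfold gker Ptail
  congr 2; ext k
  congr 1
  rw [← Real.cos_add_nat_mul_two_pi (_ * t - β * π / 2) (k + (n - 1) + 1)]
  congr 1; push_cast; ring

lemma tst_le (hn : 0 < n) (t : ℝ) : tst n t ≤ t ∧ t ≤ tst n t + 2 * π / n := by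
  have hn' : (0:ℝ) < n := by exact_mod_cast hn
  have hπ := Real.pi_pos
  have h1 := Int.floor_le ((n:ℝ) * (t + π) / (2 * π))
  have h2 := (Int.lt_floor_add_one ((n:ℝ) * (t + π) / (2 * π))).le
  rw [le_div_iff₀ (by positivity)] at h1
  rw [div_le_iff₀ (by positivity)] at h2
  unfold tst
  have e : 2 * π * (⌊(n:ℝ) * (t + π) / (2 * π)⌋ : ℝ) / n ≤ t + π := by
    rw [div_le_iff₀ hn']; linarith
  have e2 : t + π ≤ 2 * π * (⌊(n:ℝ) * (t + π) / (2 * π)⌋ : ℝ) / n + 2 * π / n := by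
    rw [← add_div, le_div_iff₀ hn']; linarith
  constructor <;> linarith

lemma tst_meas : Measurable (tst n) := by
  unfold tst
  fun_prop

lemma zpt_ne (hδ : 0 < δ) (t : ℝ) : zpt δ t ≠ 0 := by
  intro h
  have := congrArg Complex.re h
  simp [zpt] at this
  exact hδ.ne' this

lemma rho_cont (hδ : 0 < δ) : Continuous (rho δ) := by
  unfold rho
  apply Continuous.norm
  apply Continuous.inv₀
  · unfold zpt; fun_prop
  · exact zpt_ne hδ

lemma rho_pos (hδ : 0 < δ) (t : ℝ) : 0 < rho δ t := by
  unfold rho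
  exact norm_pos_iff.2 (inv_ne_zero (zpt_ne hδ t))

lemma rho_le (hδ : 0 < δ) (t : ℝ) : rho δ t ≤ 1 / δ := by
  unfold rho
  rw [norm_inv, one_div]
  have := zpt_re_ge δ t
  rw [abs_of_pos hδ] at this
  exact inv_anti₀ hδ this

lemma rho_zero (hδ : 0 < δ) : rho δ 0 = 1 / δ := by
  unfold rho zpt
  simp [abs_of_pos hδ]

lemma the_meas : Measurable (the δ) := by
  unfold the
  apply Complex.measurable_arg.comp
  apply Measurable.inv
  unfold zpt; fun_prop

lemma hst_meas (hδ : 0 < δ) : Measurable (hst δ β n) := by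
  unfold hst
  have h1 := (rho_cont hδ).measurable.comp (tst_meas (n := n))
  have h2 := (the_meas (δ := δ)).comp (tst_meas (n := n))
  apply h1.mul
  apply Real.measurable_cos.comp
  apply Measurable.add (by fun_prop)
  exact h2.sub_const _

lemma Good.zdiff (G : Good α r n δ ε) (t : ℝ) :
    ‖(zpt δ t)⁻¹ - (zpt δ (tst n t))⁻¹‖ ≤ 2 * π * ε * rho δ t := by
  have hz := zpt_ne G.hδ0 t
  have hz' := zpt_ne G.hδ0 (tst n t)
  obtain ⟨h1, h2⟩ := tst_le G.hn t
  have hn := G.npos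
  rw [inv_sub_inv hz hz', norm_div, norm_mul, rho, norm_inv]
  have e : ‖zpt δ (tst n t) - zpt δ t‖ ≤ 2 * π / n := by
    have : zpt δ (tst n t) - zpt δ t = ((t - tst n t : ℝ) : ℂ) * Complex.I := by
      unfold zpt; push_cast; ring
    rw [this, norm_mul, Complex.norm_I, mul_one, Complex.norm_real, Real.norm_of_nonneg (by linarith)]
    linarith
  have hge := zpt_re_ge δ (tst n t)
  rw [abs_of_pos G.hδ0] at hge
  have hδ := G.hδ0
  have hε : ε = 1 / (n * δ) := by
    have := G.hnδ
    field_simp; linarith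
  have hzp : 0 < ‖zpt δ t‖ := norm_pos_iff.2 hz
  have hπ := Real.pi_pos
  calc _ ≤ (2 * π / n) / (‖zpt δ t‖ * δ) := by gcongr
    _ = _ := by rw [hε]; field_simp

lemma Good.rho_diff (G : Good α r n δ ε) (t : ℝ) :
    |rho δ (tst n t) - rho δ t| ≤ 2 * π * ε * rho δ t := by
  rw [abs_sub_comm]
  exact (abs_norm_sub_norm_le _ _).trans (G.zdiff t)

lemma Good.gker_approx (G : Good α r n δ ε) {t : ℝ} (ht : |t| ≤ π) :
    |gker α r β n t - hst δ β n t| ≤ 6 + (4 + 2 * π) * ε * rho δ t := by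
  have e : hst δ β n t = (Complex.exp (((n:ℝ) * t - β * π / 2 : ℝ) * Complex.I) * (zpt δ (tst n t))⁻¹).re := by
    rw [D_re, hst, rho, the]; congr 2; ring
  rw [e, G.gker_eq, ← Complex.sub_re, ← mul_sub]
  refine (Complex.abs_re_le_norm _).trans ?_
  rw [norm_mul, Complex.norm_exp_ofReal_mul_I, one_mul]
  have h1 := G.Asum_approx ht
  have h2 := G.zdiff t
  have h3 := norm_add_le (Asum α r n t - (zpt δ t)⁻¹) ((zpt δ t)⁻¹ - (zpt δ (tst n t))⁻¹)
  rw [sub_add_sub_cancel] at h3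
  change _ ≤ 6 + 4 * ε * rho δ t at h1
  linarith
end

/-! ### Part E : step integrals -/

section
variable {n : ℕ}

lemma tst_cell (hn : 0 < n) (j : ℕ) {t : ℝ} (h1 : -π + 2 * π * j / n ≤ t)
    (h2 : t < -π + 2 * π * (j + 1 : ℕ) / n) : tst n t = -π + 2 * π * j / n := by
  have hn' : (0:ℝ) < n := by exact_mod_cast hn
  have hπ := Real.pi_pos
  have : ⌊(n:ℝ) * (t + π) / (2 * π)⌋ = (j : ℤ) := by
    rw [Int.floor_eq_iff]
    constructor
    · rw [le_div_iff₀ (by positivity)]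
      have : 2 * π * j / n ≤ t + π := by linarith
      rw [div_le_iff₀ hn'] at this
      push_cast; linarith
    · rw [div_lt_iff₀ (by positivity)]
      have : t + π < 2 * π * (j + 1 : ℕ) / n := by linarith
      rw [lt_div_iff₀ hn'] at this
      push_cast at this ⊢; linarith
  rw [tst, this]; simp

lemma E_int {F : ℝ → ℝ} (hF : Measurable F) {M : ℝ} (hM : ∀ u, |F u| ≤ M) (a b : ℝ) :
    IntervalIntegrable F volume a b := by
  refine (intervalIntegrable_const (c := M)).mono_fun hF.aestronglyMeasurable ?_
  refine Eventually.of_forall fun u => ?_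
  change |F u| ≤ |M|
  exact (hM u).trans (le_abs_self M)

lemma E_cell (hn : 0 < n) {F : ℝ → ℝ} (hF : Measurable F) {M : ℝ} (hM : ∀ u, |F u| ≤ M)
    (hper : Function.Periodic F (2 * π)) (c θ : ℝ → ℝ) (j : ℕ) :
    IntervalIntegrable (fun t => c (tst n t) * F (n * t + θ (tst n t))) volume
      (-π + 2 * π * j / n) (-π + 2 * π * (j + 1 : ℕ) / n) ∧
    ∫ t in (-π + 2 * π * j / n)..(-π + 2 * π * (j + 1 : ℕ) / n), c (tst n t) * F (n * t + θ (tst n t))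
      = c (-π + 2 * π * j / n) * ((n:ℝ)⁻¹ * ∫ u in (0)..(2 * π), F u) := by
  have hn' : (0:ℝ) < n := by exact_mod_cast hn
  have hπ := Real.pi_pos
  set a := -π + 2 * π * j / n with ha
  set b := -π + 2 * π * (j + 1 : ℕ) / n with hb
  have hab : a ≤ b := by
    rw [ha, hb]; push_cast; gcongr; linarith
  have hEq : Set.EqOn (fun t => c a * F (n * t + θ a))
      (fun t => c (tst n t) * F (n * t + θ (tst n t))) (Set.Ioo a b) := by
    intro t ht
    simp only [tst_cell hn j ht.1.le ht.2]; rfl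
  have hii : IntervalIntegrable (fun t => c a * F (n * t + θ a)) volume a b := by
    refine IntervalIntegrable.const_mul ?_ _
    exact E_int (hF.comp (by fun_prop)) (fun u => hM _) a b
  constructor
  · refine hii.congr_ae ?_
    rw [Set.uIoc_of_le hab, ← Measure.restrict_congr_set (Ioo_ae_eq_Ioc (a := a) (b := b))]
    exact (ae_restrict_iff' measurableSet_Ioo).2 (Eventually.of_forall hEq)
  · have : ∫ t in a..b, c (tst n t) * F (n * t + θ (tst n t)) = ∫ t in a..b, c a * F (n * t + θ a) := by
      rw [intervalIntegral.integral_of_le hab, intervalIntegral.integral_of_le hab,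
        integral_Ioc_eq_integral_Ioo, integral_Ioc_eq_integral_Ioo]
      exact (setIntegral_congr_fun measurableSet_Ioo hEq).symm
    rw [this, intervalIntegral.integral_const_mul, intervalIntegral.integral_comp_mul_add _ hn'.ne']
    rw [show (n:ℝ) * b + θ a = n * a + θ a + 2 * π by
      rw [ha, hb]; push_cast; field_simp; ring]
    rw [hper.intervalIntegral_add_eq _ 0, zero_add, smul_eq_mul]

lemma E_sum (hn : 0 < n) {F : ℝ → ℝ} (hF : Measurable F) {M : ℝ} (hM : ∀ u, |F u| ≤ M)
    (hper : Function.Periodic F (2 * π)) (c θ : ℝ → ℝ) :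
    ∫ t in (-π)..π, c (tst n t) * F (n * t + θ (tst n t))
      = (∑ j ∈ Finset.range n, c (-π + 2 * π * j / n)) * ((n:ℝ)⁻¹ * ∫ u in (0)..(2 * π), F u) := by
  have hn' : (0:ℝ) < n := by exact_mod_cast hn
  have h := intervalIntegral.sum_integral_adjacent_intervals (μ := volume)
    (a := fun j : ℕ => -π + 2 * π * j / n) (n := n)
    (f := fun t => c (tst n t) * F (n * t + θ (tst n t)))
    (fun j _ => (E_cell hn hF hM hper c θ j).1)
  have e1 : -π + 2 * π * ((0:ℕ):ℝ) / n = -π := by simp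
  have e2 : -π + 2 * π * (n:ℝ) / n = π := by field_simp; ring
  rw [e1, e2] at h
  rw [← h, Finset.sum_mul]
  exact Finset.sum_congr rfl fun j _ => (E_cell hn hF hM hper c θ j).2

lemma E_main (hn : 0 < n) {F : ℝ → ℝ} (hF : Measurable F) {M : ℝ} (hM : ∀ u, |F u| ≤ M)
    (hper : Function.Periodic F (2 * π)) (c θ : ℝ → ℝ) :
    ∫ t in (-π)..π, c (tst n t) * F (n * t + θ (tst n t))
      = (1 / (2 * π) * ∫ u in (0)..(2 * π), F u) * ∫ t in (-π)..π, c (tst n t) := by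
  have h2 := E_sum hn (F := fun _ => 1) measurable_const (M := 1) (by simp) (fun _ => rfl) c θ
  simp only [mul_one] at h2
  rw [E_sum hn hF hM hper, h2]
  simp only [intervalIntegral.integral_const, sub_zero, smul_eq_mul, mul_one]
  have hπ := Real.pi_pos
  field_simp
end

/-! ### Part F : norms -/

noncomputable abbrev mu0 : Measure ℝ := volume.restrict (Set.Ioc (-π) π)

lemma mu0_real : mu0.real Set.univ = 2 * π := by
  have := Real.pi_pos
  rw [Measure.real, Measure.restrict_apply_univ, Real.volume_Ioc, ENNReal.toReal_ofReal (by linarith)]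
  ring

lemma mu0_ne : mu0 ≠ 0 := by
  intro h
  have := mu0_real
  rw [h] at this
  simp [Real.pi_ne_zero] at this

lemma F_mem {f : ℝ → ℝ} (hf : Measurable f) {M : ℝ} (hM : ∀ t, |f t| ≤ M) (s : ℝ≥0∞) : MemLp f s mu0 :=
  MemLp.of_bound hf.aestronglyMeasurable M (Eventually.of_forall hM)

lemma F_mono {f g : ℝ → ℝ} {s : ℝ≥0∞} {μ : Measure ℝ} (hg : MemLp g s μ) (h : ∀ᵐ x ∂μ, |f x| ≤ g x) :
    lpNorm f s μ ≤ lpNorm g s μ := by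
  by_cases hf : AEStronglyMeasurable f μ
  · rw [← toReal_eLpNorm hf, ← toReal_eLpNorm hg.aestronglyMeasurable]
    exact ENNReal.toReal_mono (hg.eLpNorm_ne_top) (eLpNorm_mono_ae_real h)
  · simp [hf]

lemma F_holder {f g : ℝ → ℝ} {s p : ℝ≥0∞} {μ : Measure ℝ} (hsp : ENNReal.HolderConjugate s p)
    (hf : MemLp f s μ) (hg : MemLp g p μ) :
    |∫ t, f t * g t ∂μ| ≤ lpNorm f s μ * lpNorm g p μ := by
  have h1 : |∫ t, f t * g t ∂μ| ≤ ∫ t, ‖f t * g t‖ ∂μ := by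
    rw [← Real.norm_eq_abs]; exact norm_integral_le_integral_norm _
  have h2 : ∫ t, ‖f t * g t‖ ∂μ = lpNorm (fun t => f t * g t) 1 μ :=
    (lpNorm_one_eq_integral_norm (hf.1.mul hg.1)).symm
  have h3 : eLpNorm (fun t => f t * g t) 1 μ ≤ eLpNorm f s μ * eLpNorm g p μ :=
    eLpNorm_smul_le_mul_eLpNorm (𝕜 := ℝ) (p := s) (q := p) (r := 1) hg.1 hf.1
  rw [h2] at h1
  refine h1.trans ?_
  have hm : AEStronglyMeasurable (fun t => f t * g t) μ := hf.1.mul hg.1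
  rw [← toReal_eLpNorm hm, ← toReal_eLpNorm hf.1, ← toReal_eLpNorm hg.1,
    ← ENNReal.toReal_mul]
  exact ENNReal.toReal_mono (ENNReal.mul_ne_top hf.eLpNorm_ne_top hg.eLpNorm_ne_top) h3

lemma F_cmul (c : ℝ) (f : ℝ → ℝ) (s : ℝ≥0∞) (μ : Measure ℝ) :
    lpNorm (fun t => c * f t) s μ = |c| * lpNorm f s μ := by
  have := lpNorm_const_smul (p := s) c f μ
  simpa using! this

lemma F_pow {s : ℝ≥0∞} (hs1 : 1 ≤ s) (hs2 : s ≠ ∞) {μ : Measure ℝ} {f : ℝ → ℝ} (hf : AEStronglyMeasurable f μ) :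
    lpNorm f s μ = (∫ t, |f t| ^ s.toReal ∂μ) ^ (s.toReal)⁻¹ :=
  lpNorm_eq_integral_norm_rpow_toReal (by positivity) hs2 hf

lemma F_mem_cont {f : ℝ → ℝ} (hf : Continuous f) (s : ℝ≥0∞) : MemLp f s mu0 := by
  obtain ⟨M, hM⟩ := (isCompact_Icc (a := -π) (b := π)).exists_bound_of_continuousOn hf.continuousOn
  refine MemLp.of_bound hf.aestronglyMeasurable M ?_
  refine (ae_restrict_iff' measurableSet_Ioc).2 (Eventually.of_forall fun t ht => ?_)
  exact hM t (Set.Ioc_subset_Icc_self ht)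

lemma F_two_pi_rpow {s : ℝ≥0∞} (hs : 1 ≤ s) : (2 * π) ^ (s.toReal)⁻¹ ≤ 2 * π := by
  have h1 : (1:ℝ) ≤ 2 * π := by linarith [Real.pi_gt_three]
  conv_rhs => rw [← Real.rpow_one (2 * π)]
  apply Real.rpow_le_rpow_of_exponent_le h1
  rcases eq_or_ne s ∞ with rfl | h
  · simp
  · apply inv_le_one_of_one_le₀
    rw [← ENNReal.toReal_one]
    exact ENNReal.toReal_mono h hs

section
variable {α r β δ ε : ℝ} {n : ℕ} {s : ℝ≥0∞}

lemma hst_le (hδ : 0 < δ) (t : ℝ) : |hst δ β n t| ≤ rho δ (tst n t) := by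
  rw [hst, abs_mul, abs_of_pos (rho_pos hδ _)]
  exact mul_le_of_le_one_right (rho_pos hδ _).le (Real.abs_cos_le_one _)

lemma hst_mem (hδ : 0 < δ) : MemLp (hst δ β n) s mu0 :=
  F_mem (hst_meas hδ) (fun t => (hst_le hδ t).trans (rho_le hδ _)) s

lemma rho_mem (hδ : 0 < δ) : MemLp (rho δ) s mu0 := F_mem_cont (rho_cont hδ) s

lemma rhot_mem (hδ : 0 < δ) : MemLp (fun t => rho δ (tst n t)) s mu0 :=
  F_mem ((rho_cont hδ).measurable.comp tst_meas) (M := 1 / δ)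
    (fun t => by rw [Function.comp, abs_of_pos (rho_pos hδ _)]; exact rho_le hδ _) s

lemma Good.F_diff (G : Good α r n δ ε) (hs : 1 ≤ s) :
    lpNorm (fun t => gker α r β n t - hst δ β n t) s mu0 ≤ (4 + 2 * π) * ε * lpNorm (rho δ) s mu0 + 12 * π := by
  have hε := G.hε0
  have hπ := Real.pi_pos
  have hs0 : s ≠ 0 := by positivity
  have m1 : MemLp (fun _ : ℝ => (6:ℝ)) s mu0 := F_mem_cont continuous_const s
  have m2 : MemLp (fun t => (4 + 2 * π) * ε * rho δ t) s mu0 := (rho_mem G.hδ0).const_mul _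
  have h1 : lpNorm (fun t => gker α r β n t - hst δ β n t) s mu0
      ≤ lpNorm ((fun _ : ℝ => (6:ℝ)) + fun t => (4 + 2 * π) * ε * rho δ t) s mu0 := by
    apply F_mono (m1.add m2)
    refine (ae_restrict_iff' measurableSet_Ioc).2 (Eventually.of_forall fun t ht => ?_)
    exact G.gker_approx (abs_le.2 ⟨ht.1.le, ht.2⟩)
  have h2 := lpNorm_add_le m1 hs (g := fun t => (4 + 2 * π) * ε * rho δ t)
  rw [F_cmul, lpNorm_const hs0 mu0_ne, mu0_real, abs_of_pos (by positivity)] at h2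
  have h3 := F_two_pi_rpow hs
  have h4 : ‖(6:ℝ)‖ = 6 := by norm_num
  rw [h4] at h2
  linarith

lemma Good.F_upper (G : Good α r n δ ε) (hs : 1 ≤ s) :
    lpNorm (gker α r β n) s mu0 ≤ lpNorm (hst δ β n) s mu0 + ((4 + 2 * π) * ε * lpNorm (rho δ) s mu0 + 12 * π) := by
  have h := lpNorm_add_le (hst_mem (β := β) (n := n) G.hδ0) hs (g := fun t => gker α r β n t - hst δ β n t)
  have e : hst δ β n + (fun t => gker α r β n t - hst δ β n t) = gker α r β n := by
    ext t; simp
  rw [e] at h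
  linarith [G.F_diff (β := β) hs]

lemma Good.F_rho (G : Good α r n δ ε) (hs : 1 ≤ s) :
    |lpNorm (fun t => rho δ (tst n t)) s mu0 - lpNorm (rho δ) s mu0| ≤ 2 * π * ε * lpNorm (rho δ) s mu0 := by
  have hε := G.hε0
  have hπ := Real.pi_pos
  have hd : lpNorm (fun t => rho δ (tst n t) - rho δ t) s mu0 ≤ 2 * π * ε * lpNorm (rho δ) s mu0 := by
    have : lpNorm (fun t => rho δ (tst n t) - rho δ t) s mu0 ≤ lpNorm (fun t => 2 * π * ε * rho δ t) s mu0 :=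
      F_mono ((rho_mem G.hδ0).const_mul _) (Eventually.of_forall fun t => G.rho_diff t)
    rwa [F_cmul, abs_of_pos (by positivity)] at this
  have a := lpNorm_le_lpNorm_add_lpNorm_sub (f := fun t => rho δ (tst n t)) (rho_mem (s := s) G.hδ0) hs
  have b := lpNorm_le_lpNorm_add_lpNorm_sub (f := rho δ) (rhot_mem (n := n) (s := s) G.hδ0) hs
  have c := lpNorm_sub_comm (rho δ) (fun t => rho δ (tst n t)) s mu0
  have e : ((fun t => rho δ (tst n t)) - rho δ) = fun t => rho δ (tst n t) - rho δ t := rfl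
  rw [abs_le]
  rw [c, e] at a
  rw [e] at b
  constructor <;> linarith

noncomputable def kap (s : ℝ≥0∞) : ℝ := cosNorm s / (2 * π) ^ (s.toReal)⁻¹

lemma cosNorm_eq (s : ℝ≥0∞) : cosNorm s = lpNorm Real.cos s (volume.restrict (Set.Ioc 0 (2 * π))) := by
  rw [cosNorm]
  exact toReal_eLpNorm Real.measurable_cos.aestronglyMeasurable

lemma kap_nonneg : 0 ≤ kap s := by
  unfold kap; rw [cosNorm_eq]
  have := Real.pi_pos
  have := lpNorm_nonneg (f := Real.cos) (p := s) (μ := volume.restrict (Set.Ioc 0 (2 * π)))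
  positivity

lemma kap_le (hs : 1 ≤ s) : kap s ≤ 1 := by
  have hπ := Real.pi_pos
  unfold kap; rw [cosNorm_eq]
  rw [div_le_one (by positivity)]
  have hv : (volume.restrict (Set.Ioc 0 (2 * π))).real Set.univ = 2 * π := by
    rw [Measure.real, Measure.restrict_apply_univ, Real.volume_Ioc, ENNReal.toReal_ofReal (by linarith)]
    ring
  have hne : volume.restrict (Set.Ioc 0 (2 * π)) ≠ 0 := by
    intro h
    rw [h] at hv
    simp [Real.pi_ne_zero] at hv
  have hs0 : s ≠ 0 := by positivity
  have := F_mono (f := Real.cos) (g := fun _ => 1) (s := s) (μ := volume.restrict (Set.Ioc 0 (2 * π)))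
    (memLp_const 1) (Eventually.of_forall Real.abs_cos_le_one)
  rw [lpNorm_const hs0 hne, hv] at this
  simpa using this

lemma F_hst (hδ : 0 < δ) (hn : 0 < n) (hs1 : 1 ≤ s) (hs2 : s ≠ ∞) :
    lpNorm (hst δ β n) s mu0 = kap s * lpNorm (fun t => rho δ (tst n t)) s mu0 := by
  have hπ := Real.pi_pos
  have hsr : 1 ≤ s.toReal := by
    rw [← ENNReal.toReal_one]; exact ENNReal.toReal_mono hs2 hs1
  have hle : -π ≤ π := by linarith
  rw [F_pow hs1 hs2 (hst_mem (s := 1) hδ).1, F_pow hs1 hs2 (rhot_mem (s := 1) hδ).1, kap, cosNorm_eq,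
    F_pow hs1 hs2 Real.measurable_cos.aestronglyMeasurable]
  have h := E_main hn (F := fun u => |Real.cos u| ^ s.toReal) (M := 1)
    (by fun_prop)
    (fun u => by
      rw [abs_of_nonneg (by positivity)]
      exact Real.rpow_le_one (abs_nonneg _) (Real.abs_cos_le_one _) (by linarith))
    (fun u => by simp only [Real.cos_add_two_pi]) (fun y => |rho δ y| ^ s.toReal) (fun y => the δ y - β * π / 2)
  rw [intervalIntegral.integral_of_le hle, intervalIntegral.integral_of_le hle,
    intervalIntegral.integral_of_le (by positivity)] at h
  have e : ∀ t, |hst δ β n t| ^ s.toReal = |rho δ (tst n t)| ^ s.toReal *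
      |Real.cos ((n:ℝ) * t + (the δ (tst n t) - β * π / 2))| ^ s.toReal := by
    intro t
    rw [hst, abs_mul, Real.mul_rpow (abs_nonneg _) (abs_nonneg _)]
  simp_rw [e]
  rw [h]
  have p1 : 0 ≤ ∫ u in Set.Ioc 0 (2 * π), |Real.cos u| ^ s.toReal := integral_nonneg fun u => by positivity
  have p2 : 0 ≤ ∫ t in Set.Ioc (-π) π, |rho δ (tst n t)| ^ s.toReal := integral_nonneg fun u => by positivity
  rw [Real.mul_rpow (by positivity) p2, one_div, Real.mul_rpow (by positivity) p1, Real.inv_rpow (by positivity)]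
  ring

/-- extremal function -/
lemma F_ext {p : ℝ≥0∞} (hδ : 0 < δ) (hn : 0 < n) (hs1 : 1 ≤ s) (hs2 : s ≠ ∞) (hsp : ENNReal.HolderConjugate s p) :
    ∃ φ : ℝ → ℝ, Measurable φ ∧ (∃ M, ∀ t, |φ t| ≤ M) ∧ lpNorm φ p mu0 ≤ 1 ∧ ∫ t, φ t ∂mu0 = 0 ∧
      ∫ t, hst δ β n t * φ t ∂mu0 = lpNorm (hst δ β n) s mu0 := by
  have hπ := Real.pi_pos
  have hsr : 1 ≤ s.toReal := by
    rw [← ENNReal.toReal_one]; exact ENNReal.toReal_mono hs2 hs1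
  set L := lpNorm (hst δ β n) s mu0 with hL
  have hL0 : 0 ≤ L := lpNorm_nonneg
  rcases eq_or_lt_of_le hL0 with h0 | hLp
  · refine ⟨fun _ => 0, measurable_const, ⟨0, by simp⟩, by simp, by simp, ?_⟩
    simpa using h0
  have hLs : L ^ s.toReal = ∫ t, |hst δ β n t| ^ s.toReal ∂mu0 := by
    rw [hL, F_pow hs1 hs2 (hst_mem (s := 1) hδ).1, Real.rpow_inv_rpow _ (by linarith)]
    exact integral_nonneg fun u => by positivity
  set ψ : ℝ → ℝ := fun t => SignType.sign (hst δ β n t) * |hst δ β n t| ^ (s.toReal - 1) with hψ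
  have hmeas : Measurable (hst δ β n) := hst_meas hδ
  have hsgn : Measurable fun x : ℝ => ((SignType.sign x : SignType) : ℝ) := by
    have : (fun x : ℝ => ((SignType.sign x : SignType) : ℝ)) = fun x => if 0 < x then 1 else if x < 0 then -1 else 0 := by
      ext x
      rw [sign_apply]
      split_ifs <;> simp
    rw [this]
    exact Measurable.ite measurableSet_Ioi measurable_const
      (Measurable.ite measurableSet_Iio measurable_const measurable_const)
  have hψm : Measurable ψ := (hsgn.comp hmeas).mul (hmeas.abs.pow_const _)
  have hsabs : ∀ x : ℝ, |((SignType.sign x : SignType) : ℝ)| ≤ 1 := by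
    intro x
    rcases lt_trichotomy x 0 with h | h | h <;> simp [h]
  have hψb : ∀ t, |ψ t| ≤ |hst δ β n t| ^ (s.toReal - 1) := by
    intro t
    rw [hψ, abs_mul, abs_of_nonneg (by positivity : (0:ℝ) ≤ |hst δ β n t| ^ (s.toReal - 1))]
    exact mul_le_of_le_one_left (by positivity) (hsabs _)
  have hψM : ∀ t, |ψ t| ≤ (1 / δ) ^ (s.toReal - 1) := fun t =>
    (hψb t).trans (Real.rpow_le_rpow (abs_nonneg _) ((hst_le hδ t).trans (rho_le hδ _)) (by linarith))
  have hint0 : ∫ t, ψ t ∂mu0 = 0 := by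
    have h := E_main hn (F := fun u => SignType.sign (Real.cos u) * |Real.cos u| ^ (s.toReal - 1)) (M := 1)
      ((hsgn.comp Real.measurable_cos).mul (by fun_prop))
      (fun u => by
        rw [abs_mul, abs_of_nonneg (by positivity : (0:ℝ) ≤ |Real.cos u| ^ (s.toReal - 1))]
        exact mul_le_one₀ (hsabs _) (by positivity)
          (Real.rpow_le_one (abs_nonneg _) (Real.abs_cos_le_one _) (by linarith)))
      (fun u => by simp only [Real.cos_add_two_pi]) (fun y => |rho δ y| ^ (s.toReal - 1))
      (fun y => the δ y - β * π / 2)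
    have hF0 : ∫ u in (0)..(2 * π), SignType.sign (Real.cos u) * |Real.cos u| ^ (s.toReal - 1) = 0 := by
      have hper : Function.Periodic (fun u => (SignType.sign (Real.cos u) : ℝ) * |Real.cos u| ^ (s.toReal - 1)) (2 * π) :=
        fun u => by simp only [Real.cos_add_two_pi]
      have h1 := hper.intervalIntegral_add_eq π 0
      have h2 := intervalIntegral.integral_comp_add_right (a := 0) (b := 2 * π)
        (fun u => (SignType.sign (Real.cos u) : ℝ) * |Real.cos u| ^ (s.toReal - 1)) π
      simp only [zero_add] at h1 h2
      rw [add_comm (2 * π) π, h1] at h2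
      simp only [Real.cos_add_pi, abs_neg, Left.sign_neg, SignType.coe_neg, neg_mul,
        intervalIntegral.integral_neg] at h2
      linarith
    rw [hF0, mul_zero, zero_mul, intervalIntegral.integral_of_le (by linarith)] at h
    rw [← h]
    apply integral_congr_ae
    refine Eventually.of_forall fun t => ?_
    simp only [hψ]
    rw [hst, abs_mul, Real.mul_rpow (abs_nonneg _) (abs_nonneg _), sign_mul, sign_pos (rho_pos hδ _), one_mul]
    ring
  have hprod : ∀ t, hst δ β n t * ψ t = |hst δ β n t| ^ s.toReal := by
    intro t
    simp only [hψ]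
    rw [← mul_assoc, mul_comm (hst δ β n t), sign_mul_self]
    rcases eq_or_ne (hst δ β n t) 0 with h | h
    · rw [h]; simp [Real.zero_rpow (by linarith : s.toReal ≠ 0)]
    · conv_rhs => rw [show s.toReal = 1 + (s.toReal - 1) by ring, Real.rpow_add (abs_pos.2 h), Real.rpow_one]
  refine ⟨fun t => (L ^ (s.toReal - 1))⁻¹ * ψ t, hψm.const_mul _, ⟨(L ^ (s.toReal - 1))⁻¹ * (1 / δ) ^ (s.toReal - 1), ?_⟩,
    ?_, ?_, ?_⟩
  · intro t
    rw [abs_mul, abs_of_nonneg (by positivity : 0 ≤ (L ^ (s.toReal - 1))⁻¹)]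
    gcongr
    exact hψM t
  · rw [F_cmul, abs_of_nonneg (by positivity : 0 ≤ (L ^ (s.toReal - 1))⁻¹), inv_mul_le_iff₀ (by positivity), mul_one]
    have hm : MemLp (fun t => |hst δ β n t| ^ (s.toReal - 1)) p mu0 :=
      F_mem (hmeas.abs.pow_const _) (M := (1 / δ) ^ (s.toReal - 1)) (fun t => by
        rw [abs_of_nonneg (by positivity)]
        exact Real.rpow_le_rpow (abs_nonneg _) ((hst_le hδ t).trans (rho_le hδ _)) (by linarith)) p
    refine (F_mono hm (Eventually.of_forall hψb)).trans ?_
    rcases eq_or_ne p ∞ with hp | hp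
    · have hs : s = 1 := by
        have := hsp.inv_add_inv_eq_inv
        rw [hp] at this
        simpa using this
      subst hs
      simp only [ENNReal.toReal_one, sub_self, Real.rpow_zero]
      rw [lpNorm_const (by rw [hp]; simp) mu0_ne, hp]
      simp
    · have hc := ENNReal.HolderConjugate.toReal_of_ne_top hs2 hp (p := s) (q := p)
      have hp1 : 1 ≤ p := ENNReal.HolderConjugate.one_le s p |> fun _ => by
        exact (ENNReal.HolderConjugate.one_le p s)
      rw [F_pow hp1 hp hm.1]
      have hps : (s.toReal - 1) * p.toReal = s.toReal := hc.sub_one_mul_conj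
      have e : ∀ t, |(|hst δ β n t| ^ (s.toReal - 1))| ^ p.toReal = |hst δ β n t| ^ s.toReal := by
        intro t
        rw [abs_of_nonneg (by positivity), ← Real.rpow_mul (abs_nonneg _), hps]
      simp_rw [e]
      rw [← hLs, ← Real.rpow_mul hL0]
      apply le_of_eq
      congr 1
      have : p.toReal ≠ 0 := by
        intro h; rw [h, mul_zero] at hps; linarith
      field_simp; linarith
  · rw [integral_const_mul, hint0, mul_zero]
  · have : ∀ t, hst δ β n t * ((L ^ (s.toReal - 1))⁻¹ * ψ t) = (L ^ (s.toReal - 1))⁻¹ * |hst δ β n t| ^ s.toReal := by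
      intro t; rw [← hprod t]; ring
    simp_rw [this]
    rw [integral_const_mul, ← hLs, inv_mul_eq_iff_eq_mul₀ (by positivity)]
    conv_lhs => rw [show s.toReal = (s.toReal - 1) + 1 by ring, Real.rpow_add hLp, Real.rpow_one]
end

/-! ### Part G : upper bound for the class, and the generic lower bound -/

lemma G_smul {ψ : ℝ → ℝ} (hper : Function.Periodic ψ (2 * π)) (g : AddSubgroup.zmultiples (2 * π)) (x : ℝ) :
    ψ (g +ᵥ x) = ψ x := by
  obtain ⟨k, hk⟩ := AddSubgroup.mem_zmultiples_iff.1 g.2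
  change ψ ((g : ℝ) + x) = ψ x
  rw [← hk, add_comm]
  exact hper.zsmul k x

lemma G_meas {ψ : ℝ → ℝ} (hper : Function.Periodic ψ (2 * π)) (a b : ℝ) :
    AEStronglyMeasurable ψ (volume.restrict (Set.Ioc a (a + 2 * π))) ↔
      AEStronglyMeasurable ψ (volume.restrict (Set.Ioc b (b + 2 * π))) :=
  (isAddFundamentalDomain_Ioc Real.two_pi_pos a).aestronglyMeasurable_on_iff
    (isAddFundamentalDomain_Ioc Real.two_pi_pos b) (G_smul hper)

lemma G_norm {ψ : ℝ → ℝ} (hper : Function.Periodic ψ (2 * π)) (p : ℝ≥0∞) (a b : ℝ) :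
    eLpNorm ψ p (volume.restrict (Set.Ioc a (a + 2 * π))) = eLpNorm ψ p (volume.restrict (Set.Ioc b (b + 2 * π))) := by
  rcases eq_or_ne p 0 with rfl | h0
  · simp
  rcases eq_or_ne p ∞ with rfl | h1
  · simp only [eLpNorm_exponent_top, eLpNormEssSup]
    have key : ∀ c : ℝ, essSup (fun x => ‖ψ x‖ₑ) (volume.restrict (Set.Ioc c (c + 2 * π))) = essSup (fun x => ‖ψ x‖ₑ) volume :=
      fun c => (isAddFundamentalDomain_Ioc Real.two_pi_pos c volume).essSup_measure_restrict
        (f := fun x => ‖ψ x‖ₑ) (fun g x => by rw [G_smul hper])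
    rw [key, key]
  · rw [eLpNorm_eq_lintegral_rpow_enorm_toReal h0 h1, eLpNorm_eq_lintegral_rpow_enorm_toReal h0 h1]
    congr 1
    exact (isAddFundamentalDomain_Ioc Real.two_pi_pos a).setLIntegral_eq
      (isAddFundamentalDomain_Ioc Real.two_pi_pos b) (fun x => ‖ψ x‖ₑ ^ p.toReal) (fun g x => by rw [G_smul hper])

lemma G_refl {ψ : ℝ → ℝ} (hψ : Measurable ψ) (hper : Function.Periodic ψ (2 * π)) (p : ℝ≥0∞) (x : ℝ) :
    eLpNorm (fun t => ψ (x - t)) p mu0 = eLpNorm ψ p mu0 := by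
  have h1 : MeasurePreserving (fun t : ℝ => x - t) mu0 (volume.restrict (Set.Ico (x - π) (x + π))) := by
    have := (Measure.measurePreserving_sub_left (volume : Measure ℝ) x).restrict_preimage
      (s := Set.Ico (x - π) (x + π)) measurableSet_Ico
    convert! this using 2
    ext t
    simp only [Set.mem_Ioc, Set.mem_preimage, Set.mem_Ico]
    constructor <;> rintro ⟨h1, h2⟩ <;> constructor <;> linarith
  have h2 := eLpNorm_comp_measurePreserving (p := p) hψ.aestronglyMeasurable h1
  have h3 : volume.restrict (Set.Ico (x - π) (x + π)) = volume.restrict (Set.Ioc (x - π) (x - π + 2 * π)) := by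
    rw [show x - π + 2 * π = x + π by ring]
    exact Measure.restrict_congr_set Ico_ae_eq_Ioc
  rw [h3, G_norm hper p (x - π) (-π), show -π + 2 * π = π by ring] at h2
  exact h2

section
variable {α r β δ ε : ℝ} {n : ℕ} {s p : ℝ≥0∞}

lemma Good.G_class (G : Good α r n δ ε) (hp : 1 ≤ p) (hsp : ENNReal.HolderConjugate s p) {f : ℝ → ℝ}
    (hf : f ∈ poissonClass α r β p) (x : ℝ) :
    |f x - fourierSum (n - 1) f x| ≤ Real.exp (-α * (n:ℝ) ^ r) / π * lpNorm (gker α r β n) s mu0 := by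
  have hπ := Real.pi_pos
  obtain ⟨-, a₀, φ, hφp, hφn, -, hfx⟩ := hf
  have hm := G.mco_summable
  have hRHS : 0 ≤ Real.exp (-α * (n:ℝ) ^ r) / π * lpNorm (gker α r β n) s mu0 :=
    mul_nonneg (by positivity) lpNorm_nonneg
  have hle : -π ≤ π := by linarith
  by_cases hmeas : AEStronglyMeasurable φ mu0
  · have hn : eLpNorm φ p mu0 ≤ 1 := by
      have := G_norm (ψ := φ) hφp p 0 (-π)
      rw [zero_add, show -π + 2 * π = π by ring] at this
      rwa [← this]
    have hφm : MemLp φ p mu0 := ⟨hmeas, hn.trans_lt ENNReal.one_lt_top⟩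
    rw [C_main hm (hφm.integrable hp) hfx]
    have e : ∀ t, Ptail α r β (n - 1) (x - t) = Real.exp (-α * (n:ℝ) ^ r) * gker α r β n (x - t) := by
      intro t
      rw [gker, ← mul_assoc, ← Real.exp_add]
      simp
    simp_rw [e, mul_assoc]
    rw [intervalIntegral.integral_const_mul, intervalIntegral.integral_of_le hle, abs_mul, abs_mul,
      abs_of_pos (Real.exp_pos _), abs_of_pos (by positivity : 0 < 1 / π)]
    have hgm : MemLp (fun t => gker α r β n (x - t)) s mu0 :=
      F_mem_cont (G.gker_cont.comp (by fun_prop)) s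
    have hH := F_holder hsp hgm hφm
    have hN : lpNorm (fun t => gker α r β n (x - t)) s mu0 = lpNorm (gker α r β n) s mu0 := by
      rw [← toReal_eLpNorm hgm.1, ← toReal_eLpNorm G.gker_cont.aestronglyMeasurable,
        G_refl G.gker_cont.measurable gker_periodic]
    have hφ1 : lpNorm φ p mu0 ≤ 1 := by
      rw [← toReal_eLpNorm hmeas, ← ENNReal.toReal_one]
      exact ENNReal.toReal_mono ENNReal.one_ne_top hn
    rw [hN] at hH
    have hL : 0 ≤ lpNorm (gker α r β n) s mu0 := lpNorm_nonneg
    have : |∫ t in Set.Ioc (-π) π, gker α r β n (x - t) * φ t| ≤ lpNorm (gker α r β n) s mu0 :=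
      hH.trans (mul_le_of_le_one_right hL hφ1)
    calc _ ≤ 1 / π * (Real.exp (-α * (n:ℝ) ^ r) * lpNorm (gker α r β n) s mu0) := by gcongr
      _ = _ := by ring
  · have hz : ∀ y, ∫ t in (-π)..π, genPoissonKernel α r β (y - t) * φ t = 0 := by
      intro y
      rw [intervalIntegral.integral_of_le hle]
      apply integral_undef
      intro hi
      apply hmeas
      have hnz : ∀ᵐ t ∂mu0, genPoissonKernel α r β (y - t) ≠ 0 := by
        apply ae_restrict_of_ae
        exact (Measure.measurePreserving_sub_left (volume : Measure ℝ) y).quasiMeasurePreserving.ae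
          (B_null (β := β) G.hα G.h0 G.h1 hm)
      have hPc : AEStronglyMeasurable (fun t => (genPoissonKernel α r β (y - t))⁻¹) mu0 := by
        apply AEMeasurable.aestronglyMeasurable
        apply AEMeasurable.inv
        apply Measurable.aemeasurable
        have hc : Continuous (genPoissonKernel α r β) := by
          unfold genPoissonKernel
          refine continuous_tsum (u := mco α r) (fun k => by fun_prop) hm ?_
          intro k t
          rw [norm_mul, Real.norm_of_nonneg (Real.exp_pos _).le, Real.norm_eq_abs, mco]
          exact mul_le_of_le_one_right (Real.exp_pos _).le (Real.abs_cos_le_one _)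
        exact (hc.comp (by fun_prop : Continuous fun t => y - t)).measurable
      refine (hPc.mul hi.1).congr ?_
      filter_upwards [hnz] with t ht
      simp only [Pi.mul_apply]
      field_simp
    have hf0 : ∀ y, f y = a₀ / 2 + (1 / π) * ∫ t in (-π)..π, genPoissonKernel α r β (y - t) * (fun _ => (0:ℝ)) t := by
      intro y; rw [hfx, hz]; simp
    rw [C_main hm (integrable_zero _ _ _) hf0]
    simpa using hRHS

lemma Good.G_inner (G : Good α r n δ ε) (hp : 1 ≤ p) (hsp : ENNReal.HolderConjugate s p) (f : ℝ → ℝ) :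
    (⨆ (_ : f ∈ poissonClass α r β p), ⨆ x : ℝ, |f x - fourierSum (n - 1) f x|)
      ≤ Real.exp (-α * (n:ℝ) ^ r) / π * lpNorm (gker α r β n) s mu0 := by
  have hπ := Real.pi_pos
  have hRHS : 0 ≤ Real.exp (-α * (n:ℝ) ^ r) / π * lpNorm (gker α r β n) s mu0 :=
    mul_nonneg (by positivity) lpNorm_nonneg
  exact Real.iSup_le (fun hf => Real.iSup_le (fun x => G.G_class hp hsp hf x) hRHS) hRHS

lemma Good.G_upper (G : Good α r n δ ε) (hp : 1 ≤ p) (hsp : ENNReal.HolderConjugate s p) :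
    EnC α r β p n ≤ Real.exp (-α * (n:ℝ) ^ r) / π * lpNorm (gker α r β n) s mu0 := by
  have hπ := Real.pi_pos
  have hRHS : 0 ≤ Real.exp (-α * (n:ℝ) ^ r) / π * lpNorm (gker α r β n) s mu0 :=
    mul_nonneg (by positivity) lpNorm_nonneg
  exact Real.iSup_le (fun f => G.G_inner hp hsp f) hRHS

lemma Good.G_le (G : Good α r n δ ε) (hp : 1 ≤ p) (hsp : ENNReal.HolderConjugate s p) {f : ℝ → ℝ}
    (hf : f ∈ poissonClass α r β p) (x : ℝ) : |f x - fourierSum (n - 1) f x| ≤ EnC α r β p n := by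
  have h1 : |f x - fourierSum (n - 1) f x| ≤ ⨆ x : ℝ, |f x - fourierSum (n - 1) f x| :=
    le_ciSup (f := fun x => |f x - fourierSum (n - 1) f x|)
      ⟨_, by rintro _ ⟨y, rfl⟩; exact G.G_class hp hsp hf y⟩ x
  have h2 : (⨆ x : ℝ, |f x - fourierSum (n - 1) f x|)
      = ⨆ (_ : f ∈ poissonClass α r β p), ⨆ x : ℝ, |f x - fourierSum (n - 1) f x| := by
    rw [ciSup_pos hf]
  have h3 := le_ciSup (f := fun f => ⨆ (_ : f ∈ poissonClass α r β p), ⨆ x : ℝ, |f x - fourierSum (n - 1) f x|)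
      ⟨_, by rintro _ ⟨y, rfl⟩; exact G.G_inner hp hsp y⟩ f
  rw [h2] at h1
  exact h1.trans h3

noncomputable def fold (t : ℝ) : ℝ := 2 * π * Int.fract ((t + π) / (2 * π)) - π

lemma fold_periodic : Function.Periodic fold (2 * π) := by
  intro t
  unfold fold
  rw [show (t + 2 * π + π) / (2 * π) = (t + π) / (2 * π) + 1 by
    have := Real.pi_pos
    field_simp; ring]
  rw [Int.fract_add_one]

lemma fold_eq {t : ℝ} (h1 : -π ≤ t) (h2 : t < π) : fold t = t := by
  have hπ := Real.pi_pos
  unfold fold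
  rw [Int.fract_eq_self.2]
  · field_simp; ring
  · constructor
    · apply div_nonneg <;> linarith
    · rw [div_lt_one (by positivity)]; linarith

lemma fold_meas : Measurable fold := by
  unfold fold
  exact ((measurable_fract.comp (by fun_prop)).const_mul _).sub_const _

lemma fold_ae : ∀ᵐ t ∂mu0, fold t = t := by
  rw [mu0, ← Measure.restrict_congr_set (Ioo_ae_eq_Ioc (a := -π) (b := π))]
  exact (ae_restrict_iff' measurableSet_Ioo).2 (Eventually.of_forall fun t ht => fold_eq ht.1.le ht.2)

lemma Good.G_lower (G : Good α r n δ ε) (hp : 1 ≤ p) (hsp : ENNReal.HolderConjugate s p) {φ : ℝ → ℝ}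
    (hφ : Measurable φ) (hφb : ∃ M, ∀ t, |φ t| ≤ M) (hφn : lpNorm φ p mu0 ≤ 1) (hφ0 : ∫ t, φ t ∂mu0 = 0) :
    Real.exp (-α * (n:ℝ) ^ r) / π * ∫ t, gker α r β n t * φ t ∂mu0 ≤ EnC α r β p n := by
  have hπ := Real.pi_pos
  have hle : -π ≤ π := by linarith
  have hm := G.mco_summable
  obtain ⟨M, hM⟩ := hφb
  set Φ : ℝ → ℝ := fun t => φ (fold t) with hΦ
  have hΦm : Measurable Φ := hφ.comp fold_meas
  have hΦp : Function.Periodic Φ (2 * π) := fun t => by simp only [hΦ, fold_periodic t]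
  set ψ : ℝ → ℝ := fun t => Φ (0 - t) with hψ
  have hψm : Measurable ψ := hΦm.comp (by fun_prop)
  have hψp : Function.Periodic ψ (2 * π) := fun t => by
    simp only [hψ]
    rw [← hΦp (0 - (t + 2 * π))]
    congr 1; ring
  have hΦae : Φ =ᵐ[mu0] φ := by
    filter_upwards [fold_ae] with t ht
    simp only [hΦ, ht]
  have hnorm : eLpNorm ψ p (volume.restrict (Set.Ioc 0 (2 * π))) ≤ 1 := by
    have h1 := G_norm hψp p 0 (-π)
    rw [zero_add, show -π + 2 * π = π by ring] at h1
    rw [h1, G_refl hΦm hΦp, eLpNorm_congr_ae hΦae]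
    have hmem := F_mem hφ hM p
    rw [← ENNReal.ofReal_one, ← ofReal_lpNorm hmem]
    exact ENNReal.ofReal_le_ofReal hφn
  have hint : ∫ t in (0)..(2 * π), ψ t = 0 := by
    have h1 := hψp.intervalIntegral_add_eq 0 (-π)
    rw [zero_add, show -π + 2 * π = π by ring] at h1
    rw [h1]
    simp only [hψ]
    rw [intervalIntegral.integral_comp_sub_left (fun t => Φ t) 0, zero_sub, sub_neg_eq_add, zero_add,
      intervalIntegral.integral_of_le hle, integral_congr_ae hΦae]
    exact hφ0
  set f : ℝ → ℝ := fun x => (0:ℝ) / 2 + (1 / π) * ∫ t in (-π)..π, genPoissonKernel α r β (x - t) * ψ t with hf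
  have hfc : f ∈ poissonClass α r β p := by
    refine ⟨fun x => ?_, 0, ψ, hψp, hnorm, hint, fun x => rfl⟩
    simp only [hf]
    congr 3; ext t
    rw [show x + 2 * π - t = x - t + 2 * π by ring, B_periodic]
  have h := G.G_le hp hsp hfc 0
  have hψi : Integrable ψ mu0 := (F_mem hψm (M := M) (fun t => hM _) 1).integrable le_rfl
  rw [C_main hm hψi (fun x => rfl)] at h
  refine le_trans (le_of_eq ?_) ((le_abs_self _).trans h)
  simp only [hψ]
  rw [intervalIntegral.integral_comp_sub_left (fun t => Ptail α r β (n - 1) t * Φ t) 0, zero_sub, sub_neg_eq_add,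
    zero_add, intervalIntegral.integral_of_le hle]
  have e : ∀ t, gker α r β n t * φ t = Real.exp (α * (n:ℝ) ^ r) * (Ptail α r β (n - 1) t * φ t) := by
    intro t; rw [gker]; ring
  simp_rw [e]
  rw [integral_const_mul]
  have e2 : ∫ t in Set.Ioc (-π) π, Ptail α r β (n - 1) t * Φ t = ∫ t, Ptail α r β (n - 1) t * φ t ∂mu0 := by
    apply integral_congr_ae
    filter_upwards [hΦae] with t ht
    rw [ht]
  rw [e2]
  have e3 : Real.exp (-α * (n:ℝ) ^ r) * Real.exp (α * (n:ℝ) ^ r) = 1 := by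
    rw [← Real.exp_add]; simp
  calc _ = (Real.exp (-α * (n:ℝ) ^ r) * Real.exp (α * (n:ℝ) ^ r)) * (1 / π * ∫ t, Ptail α r β (n - 1) t * φ t ∂mu0) := by ring
    _ = _ := by rw [e3, one_mul]

end

/-! ### Part K : main estimates -/

section
variable {α r β δ ε : ℝ} {n : ℕ} {s p : ℝ≥0∞}

noncomputable def PhiE (α r β : ℝ) (p : ℝ≥0∞) (n : ℕ) : ℝ := π * Real.exp (α * (n:ℝ) ^ r) * EnC α r β p n

lemma PhiE_eq : EnC α r β p n = Real.exp (-α * (n:ℝ) ^ r) / π * PhiE α r β p n := by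
  have hπ := Real.pi_pos
  unfold PhiE
  have e3 : Real.exp (-α * (n:ℝ) ^ r) * Real.exp (α * (n:ℝ) ^ r) = 1 := by
    rw [← Real.exp_add]; simp
  calc _ = (Real.exp (-α * (n:ℝ) ^ r) * Real.exp (α * (n:ℝ) ^ r)) * EnC α r β p n := by rw [e3, one_mul]
    _ = _ := by field_simp

lemma Good.K_upper (G : Good α r n δ ε) (hp : 1 ≤ p) (hsp : ENNReal.HolderConjugate s p) :
    PhiE α r β p n ≤ lpNorm (gker α r β n) s mu0 := by
  have hπ := Real.pi_pos
  have h := G.G_upper (β := β) hp hsp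
  rw [PhiE_eq] at h
  exact le_of_mul_le_mul_left h (by positivity)

lemma Good.K_lower (G : Good α r n δ ε) (hp : 1 ≤ p) (hs : 1 ≤ s) (hsp : ENNReal.HolderConjugate s p) {φ : ℝ → ℝ}
    (hφ : Measurable φ) (hφb : ∃ M, ∀ t, |φ t| ≤ M) (hφn : lpNorm φ p mu0 ≤ 1) (hφ0 : ∫ t, φ t ∂mu0 = 0) :
    ∫ t, hst δ β n t * φ t ∂mu0 - ((4 + 2 * π) * ε * lpNorm (rho δ) s mu0 + 12 * π) ≤ PhiE α r β p n := by
  have hπ := Real.pi_pos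
  have h := G.G_lower (β := β) hp hsp hφ hφb hφn hφ0
  rw [PhiE_eq] at h
  have h1 := le_of_mul_le_mul_left h (by positivity)
  obtain ⟨M, hM⟩ := hφb
  have mφ := F_mem hφ hM p
  have mg : MemLp (gker α r β n) s mu0 := F_mem_cont G.gker_cont s
  have mh : MemLp (hst δ β n) s mu0 := hst_mem G.hδ0
  have hH := F_holder hsp (mg.sub mh) mφ
  have e1 : ∫ t, (gker α r β n - hst δ β n) t * φ t ∂mu0 = ∫ t, gker α r β n t * φ t ∂mu0 - ∫ t, hst δ β n t * φ t ∂mu0 := by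
    have i1 : Integrable (fun t => gker α r β n t * φ t) mu0 := mg.integrable_mul mφ
    have i2 : Integrable (fun t => hst δ β n t * φ t) mu0 := mh.integrable_mul mφ
    rw [← integral_sub i1 i2]
    congr 1; ext t; simp [sub_mul]
  rw [e1] at hH
  have hd : lpNorm (gker α r β n - hst δ β n) s mu0 ≤ _ := G.F_diff (β := β) hs
  have hn0 : 0 ≤ lpNorm (gker α r β n - hst δ β n) s mu0 := lpNorm_nonneg
  have h2 := hH.trans (mul_le_of_le_one_right hn0 hφn)
  have h3 := (abs_le.1 h2).1
  linarith

lemma Good.K_fin (G : Good α r n δ ε) (hp : 1 ≤ p) (hs : 1 ≤ s) (hs2 : s ≠ ∞) (hsp : ENNReal.HolderConjugate s p) :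
    |PhiE α r β p n - kap s * lpNorm (rho δ) s mu0| ≤ (4 + 4 * π) * ε * lpNorm (rho δ) s mu0 + 12 * π := by
  have hπ := Real.pi_pos
  have hε := G.hε0
  set Y := lpNorm (rho δ) s mu0 with hY
  have hY0 : 0 ≤ Y := lpNorm_nonneg
  have u1 := G.K_upper (β := β) hp hsp
  have u2 := G.F_upper (β := β) hs
  have u3 := F_hst (β := β) G.hδ0 G.hn hs hs2
  have u4 := abs_le.1 (G.F_rho hs)
  have k0 := kap_nonneg (s := s)
  have k1 := kap_le hs
  obtain ⟨φ, a1, a2, a3, a4, a5⟩ := F_ext (β := β) G.hδ0 G.hn hs hs2 hsp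
  have l1 := G.K_lower (β := β) hp hs hsp a1 a2 a3 a4
  rw [a5] at l1
  set R := lpNorm (fun t => rho δ (tst n t)) s mu0 with hR
  have q : |kap s * (R - Y)| ≤ 2 * π * ε * Y := by
    rw [abs_mul, abs_of_nonneg k0]
    exact (mul_le_of_le_one_left (abs_nonneg _) k1).trans (abs_le.2 u4)
  have q' := abs_le.1 q
  rw [abs_le]
  rw [u3] at u2 l1
  constructor <;> nlinarith

lemma K_F0 {ε : ℝ} (hε : 0 < ε) (hε1 : ε ≤ 1 / 14) : ∃ F : ℝ → ℝ, Measurable F ∧ (∀ u, |F u| ≤ 1) ∧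
    Function.Periodic F (2 * π) ∧ ∫ u in (0)..(2 * π), F u = 0 ∧ 0 < ∫ u in (0)..(2 * π), |F u| ∧
    ∀ u, (1 - ε) * |F u| ≤ Real.cos u * F u := by
  have hπ := Real.pi_pos
  set F : ℝ → ℝ := fun u => (if 1 - ε ≤ Real.cos u then 1 else 0) - (if 1 - ε ≤ -Real.cos u then 1 else 0) with hF
  have hm : Measurable F := by
    apply Measurable.sub
    · exact Measurable.ite (measurableSet_le measurable_const Real.measurable_cos) measurable_const measurable_const
    · exact Measurable.ite (measurableSet_le measurable_const Real.measurable_cos.neg) measurable_const measurable_const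
  have hb : ∀ u, |F u| ≤ 1 := by
    intro u
    simp only [hF]
    split_ifs <;> norm_num
  have hper : Function.Periodic F (2 * π) := fun u => by simp only [hF, Real.cos_add_two_pi]
  refine ⟨F, hm, hb, hper, ?_, ?_, ?_⟩
  · have h1 := hper.intervalIntegral_add_eq π 0
    have h2 := intervalIntegral.integral_comp_add_right (a := 0) (b := 2 * π) F π
    simp only [zero_add] at h1 h2
    rw [add_comm (2 * π) π, h1] at h2
    have h3 : ∀ x, F (x + π) = - F x := by
      intro x; simp only [hF, Real.cos_add_pi, neg_neg]; ring
    simp_rw [h3] at h2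
    rw [intervalIntegral.integral_neg] at h2
    linarith
  · have hc : Continuous fun u => max 0 (Real.cos u - (1 - ε)) := by fun_prop
    have hpos : 0 < ∫ u in (0)..(2 * π), max 0 (Real.cos u - (1 - ε)) := by
      apply intervalIntegral.integral_pos (by positivity) hc.continuousOn
      · intro x _; exact le_max_left _ _
      · refine ⟨0, ⟨le_rfl, by positivity⟩, ?_⟩
        simp [hε]
    refine hpos.trans_le ?_
    apply intervalIntegral.integral_mono_on (by positivity) (hc.intervalIntegrable _ _)
      (E_int hm.abs (M := 1) (fun u => by rw [abs_abs]; exact hb u) _ _)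
    intro u _
    have := Real.cos_le_one u
    apply max_le (abs_nonneg _)
    simp only [hF]
    split_ifs <;> first | (exfalso; linarith) | (norm_num; linarith)
  · intro u
    simp only [hF]
    split_ifs with h1 h2 h2
    · exfalso; linarith
    · simp; linarith
    · simp; linarith
    · simp

lemma K_F1 (hδ : 0 < δ) (hn : 0 < n) (hε : 0 < ε) (hε1 : ε ≤ 1 / 14) :
    ∃ φ : ℝ → ℝ, Measurable φ ∧ (∃ M, ∀ t, |φ t| ≤ M) ∧ lpNorm φ 1 mu0 ≤ 1 ∧ ∫ t, φ t ∂mu0 = 0 ∧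
      (1 - ε) * rho δ (tst n 0) ≤ ∫ t, hst δ β n t * φ t ∂mu0 := by
  have hπ := Real.pi_pos
  have hn' : (0:ℝ) < n := by exact_mod_cast hn
  have hle : -π ≤ π := by linarith
  obtain ⟨F, hm, hb, hper, hF0, hFp, hFc⟩ := K_F0 hε hε1
  set c : ℝ → ℝ := fun y => if y = tst n 0 then 1 else 0 with hc
  have hcm : Measurable c := Measurable.ite (measurableSet_singleton _) measurable_const measurable_const
  set θ : ℝ → ℝ := fun y => the δ y - β * π / 2 with hθ
  set ψ : ℝ → ℝ := fun t => c (tst n t) * F (n * t + θ (tst n t)) with hψ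
  have hψm : Measurable ψ := by
    apply (hcm.comp tst_meas).mul
    apply hm.comp
    apply Measurable.add (by fun_prop)
    exact (the_meas.comp tst_meas).sub_const _
  have hc1 : ∀ y, |c y| ≤ 1 := by intro y; simp only [hc]; split_ifs <;> simp
  have hc0 : ∀ y, 0 ≤ c y := by intro y; simp only [hc]; split_ifs <;> simp
  have hψb : ∀ t, |ψ t| ≤ 1 := by
    intro t; simp only [hψ]; rw [abs_mul]
    exact mul_le_one₀ (hc1 _) (abs_nonneg _) (hb _)
  have i0 := E_sum hn hm hb hper c θ
  rw [hF0, mul_zero, mul_zero, intervalIntegral.integral_of_le hle] at i0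
  have i1 := E_sum hn hm.abs (F := fun u => |F u|) (M := 1) (fun u => by rw [abs_abs]; exact hb u)
    (fun u => by simp only [hper u]) c θ
  rw [intervalIntegral.integral_of_le hle] at i1
  have habs : ∀ t, |ψ t| = c (tst n t) * |F (n * t + θ (tst n t))| := by
    intro t; simp only [hψ]; rw [abs_mul, abs_of_nonneg (hc0 _)]
  set A := ∫ t, |ψ t| ∂mu0 with hA
  have hApos : 0 < A := by
    rw [hA]; simp_rw [habs]
    rw [i1]
    apply mul_pos _ (by positivity)
    apply Finset.sum_pos'
    · intro j _; exact hc0 _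
    · refine ⟨n / 2, Finset.mem_range.2 (by omega), ?_⟩
      have e : -π + 2 * π * ((n / 2 : ℕ):ℝ) / n = tst n 0 := by
        rw [tst]
        congr 3
        rw [show (n:ℝ) * (0 + π) / (2 * π) = (n:ℝ) / 2 by field_simp; ring]
        have : ⌊(n:ℝ) / 2⌋ = ((n / 2 : ℕ) : ℤ) := by
          rw [Int.floor_eq_iff, Int.cast_natCast]
          have a1 : 2 * (n / 2) ≤ n := by omega
          have a2 : n < 2 * (n / 2) + 2 := by omega
          have b1 : 2 * ((n / 2 : ℕ) : ℝ) ≤ n := by exact_mod_cast a1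
          have b2 : (n : ℝ) < 2 * ((n / 2 : ℕ) : ℝ) + 2 := by exact_mod_cast a2
          constructor <;> linarith
        rw [this]; exact (Int.cast_natCast _).symm
      rw [e]; simp [hc]
  have mψ : ∀ q, MemLp ψ q mu0 := fun q => F_mem hψm hψb q
  refine ⟨fun t => A⁻¹ * ψ t, hψm.const_mul _, ⟨A⁻¹ * 1, fun t => ?_⟩, ?_, ?_, ?_⟩
  · rw [abs_mul, abs_of_pos (by positivity : 0 < A⁻¹)]
    gcongr; exact hψb t
  · rw [F_cmul, abs_of_pos (by positivity : 0 < A⁻¹), lpNorm_one_eq_integral_norm (mψ 1).1]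
    simp only [Real.norm_eq_abs]
    rw [← hA, inv_mul_cancel₀ hApos.ne']
  · rw [integral_const_mul]
    have : ∫ t, ψ t ∂mu0 = 0 := i0
    rw [this, mul_zero]
  · have h1 : ∀ t, (1 - ε) * rho δ (tst n 0) * |ψ t| ≤ hst δ β n t * ψ t := by
      intro t
      rw [habs]
      simp only [hψ, hc]
      split_ifs with h
      · have := hFc (n * t + θ (tst n t))
        have hr := (rho_pos hδ (tst n 0)).le
        rw [hst, h]
        simp only [one_mul]
        rw [h] at this
        have := mul_le_mul_of_nonneg_left this hr
        simp only [hθ] at this ⊢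
        linarith
      · simp
    have h2 : (1 - ε) * rho δ (tst n 0) * A ≤ ∫ t, hst δ β n t * ψ t ∂mu0 := by
      rw [hA, ← integral_const_mul]
      apply integral_mono
      · exact ((mψ 1).integrable le_rfl).abs.const_mul _
      · exact (hst_mem (s := ∞) hδ).integrable_mul (mψ 1)
      · exact h1
    have e : ∀ t, hst δ β n t * (A⁻¹ * ψ t) = A⁻¹ * (hst δ β n t * ψ t) := fun t => by ring
    simp_rw [e]
    rw [integral_const_mul, le_inv_mul_iff₀ hApos]
    linarith

lemma Good.K_inf (G : Good α r n δ ε) :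
    |PhiE α r β 1 n - 1 / δ| ≤ (5 + 4 * π) * ε * (1 / δ) + 12 * π := by
  have hπ := Real.pi_pos
  have hε := G.hε0
  have hδ := G.hδ0
  have hsp : ENNReal.HolderConjugate ∞ 1 := ENNReal.HolderConjugate.top_one
  have u1 := G.K_upper (β := β) le_rfl hsp
  have u2 := G.F_upper (β := β) (s := ∞) le_top
  have hcn : lpNorm (fun _ : ℝ => 1 / δ) ∞ mu0 = 1 / δ := by
    rw [lpNorm_const (by simp) mu0_ne, Real.norm_of_nonneg (by positivity)]
    simp
  have hcm : MemLp (fun _ : ℝ => 1 / δ) ∞ mu0 := memLp_const _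
  have v1 : lpNorm (hst δ β n) ∞ mu0 ≤ 1 / δ := by
    conv_rhs => rw [← hcn]
    exact F_mono hcm (Eventually.of_forall fun t => (hst_le hδ t).trans (rho_le hδ _))
  have v2 : lpNorm (rho δ) ∞ mu0 ≤ 1 / δ := by
    conv_rhs => rw [← hcn]
    exact F_mono hcm (Eventually.of_forall fun t => by
      rw [abs_of_pos (rho_pos hδ _)]; exact rho_le hδ _)
  obtain ⟨φ, a1, a2, a3, a4, a5⟩ := K_F1 (β := β) G.hδ0 G.hn G.hε0 G.hε1
  have l1 := G.K_lower (β := β) le_rfl le_top hsp a1 a2 a3 a4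
  have w := (abs_le.1 (G.rho_diff 0)).1
  rw [rho_zero hδ] at w
  have hw : (4 + 2 * π) * ε * lpNorm (rho δ) ∞ mu0 ≤ (4 + 2 * π) * ε * (1 / δ) := by gcongr
  set D := 1 / δ with hD
  have hD0 : 0 < D := by positivity
  have hr := rho_le hδ (tst n 0)
  have : ε * rho δ (tst n 0) ≤ ε * D := by gcongr
  have h3 : 0 < ε * D := by positivity
  have h4 : 0 < π * (ε * D) := by positivity
  rw [abs_le]
  constructor <;> nlinarith
end

/-! ### Part J : scaling and final assembly -/

noncomputable def gJ (t : ℝ) : ℝ := 1 / Real.sqrt (t ^ 2 + 1)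

lemma gJ_pos (t : ℝ) : 0 < gJ t := by unfold gJ; positivity

lemma gJ_cont : Continuous gJ := by
  unfold gJ
  apply Continuous.div continuous_const (by fun_prop)
  intro x; positivity

lemma Jfun_eq (s : ℝ≥0∞) (v : ℝ) : Jfun s v = lpNorm gJ s (volume.restrict (Set.Ioc 0 v)) := by
  rw [Jfun]
  exact toReal_eLpNorm gJ_cont.aestronglyMeasurable

lemma rho_gJ {δ : ℝ} (hδ : 0 < δ) (t : ℝ) : rho δ t = δ⁻¹ * gJ (t / δ) := by
  have h : ‖zpt δ t‖ = δ * Real.sqrt ((t / δ) ^ 2 + 1) := by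
    rw [Complex.norm_eq_sqrt_sq_add_sq]
    have e : (zpt δ t).re ^ 2 + (zpt δ t).im ^ 2 = δ ^ 2 * ((t / δ) ^ 2 + 1) := by
      simp [zpt]; field_simp; ring
    rw [e, Real.sqrt_mul (by positivity), Real.sqrt_sq hδ.le]
  rw [rho, norm_inv, h, gJ, mul_inv, one_div]

lemma J_scale {δ : ℝ} {s : ℝ≥0∞} (hδ : 0 < δ) (hs : 1 ≤ s) (hs2 : s ≠ ∞) :
    lpNorm (rho δ) s mu0 = 2 ^ (s.toReal)⁻¹ * δ ^ ((s.toReal)⁻¹ - 1) * Jfun s (π / δ) := by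
  have hπ := Real.pi_pos
  have hτ : 1 ≤ s.toReal := by
    rw [← ENNReal.toReal_one]; exact ENNReal.toReal_mono hs2 hs
  set τ := s.toReal with hτd
  have hv : 0 < π / δ := by positivity
  rw [Jfun_eq, F_pow hs hs2 (rho_cont hδ).aestronglyMeasurable, F_pow hs hs2 gJ_cont.aestronglyMeasurable,
    ← hτd]
  have hgc : Continuous fun t => gJ t ^ τ :=
    gJ_cont.rpow_const (fun x => Or.inl (gJ_pos x).ne')
  have hii : ∀ a b, IntervalIntegrable (fun t => gJ t ^ τ) volume a b := fun a b => hgc.intervalIntegrable a b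
  have e1 : ∀ t, |gJ t| ^ τ = gJ t ^ τ := fun t => by rw [abs_of_pos (gJ_pos t)]
  have e2 : ∀ t, |rho δ t| ^ τ = (δ⁻¹) ^ τ * gJ (t / δ) ^ τ := fun t => by
    rw [abs_of_pos (rho_pos hδ t), rho_gJ hδ, Real.mul_rpow (by positivity) (gJ_pos _).le]
  simp_rw [e1, e2]
  rw [← intervalIntegral.integral_of_le (by linarith : -π ≤ π), ← intervalIntegral.integral_of_le hv.le,
    intervalIntegral.integral_const_mul,
    intervalIntegral.integral_comp_div (fun t => gJ t ^ τ) hδ.ne',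
    ← intervalIntegral.integral_add_adjacent_intervals (hii _ 0) (hii 0 _)]
  have e3 : ∫ t in (-π / δ)..0, gJ t ^ τ = ∫ t in (0:ℝ)..(π / δ), gJ t ^ τ := by
    have := intervalIntegral.integral_comp_neg (fun t => gJ t ^ τ) (a := -π / δ) (b := 0)
    rw [show -(-π / δ) = π / δ by ring, neg_zero] at this
    rw [← this]
    congr 1; ext t; simp [gJ]
  rw [e3]
  set I := ∫ t in (0:ℝ)..(π / δ), gJ t ^ τ with hI
  have hI0 : 0 ≤ I := intervalIntegral.integral_nonneg hv.le fun t _ => by have := gJ_pos t; positivity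
  rw [smul_eq_mul, show (δ⁻¹) ^ τ * (δ * (I + I)) = 2 * (δ ^ (1 - τ)) * I by
    rw [Real.inv_rpow hδ.le, Real.rpow_sub hδ, Real.rpow_one]; ring]
  rw [Real.mul_rpow (by positivity) hI0, Real.mul_rpow (by positivity) (by positivity), ← Real.rpow_mul hδ.le]
  congr 3
  field_simp

lemma J_top {f : ℝ → ℝ} (hf : Continuous f) (h0 : f 0 = 1) (hb : ∀ t, |f t| ≤ 1) {v : ℝ} (hv : 0 < v) :
    lpNorm f ∞ (volume.restrict (Set.Ioc 0 v)) = 1 := by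
  set μ := volume.restrict (Set.Ioc 0 v) with hμ
  have hm : MemLp f ∞ μ := MemLp.of_bound hf.aestronglyMeasurable 1 (Eventually.of_forall hb)
  have hne : μ ≠ 0 := by
    rw [hμ, Ne, Measure.restrict_eq_zero, Real.volume_Ioc]
    simp [hv]
  apply le_antisymm
  · have : lpNorm f ∞ μ ≤ lpNorm (fun _ : ℝ => (1:ℝ)) ∞ μ :=
      F_mono (memLp_const _) (Eventually.of_forall hb)
    rw [lpNorm_const (by simp) hne] at this
    simpa using this
  · by_contra hlt
    push Not at hlt
    have h1 := ae_le_lpNorm_exponent_top hm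
    rw [hμ, ae_restrict_iff' measurableSet_Ioc] at h1
    have h2 : ∀ᶠ t in nhds (0:ℝ), lpNorm f ∞ μ < f t := by
      have := hf.tendsto 0
      rw [h0] at this
      exact this.eventually_const_lt hlt
    obtain ⟨η, hη, hball⟩ := Metric.eventually_nhds_iff.1 h2
    have hz : volume (Set.Ioo 0 (min η v)) = 0 := by
      refine measure_mono_null ?_ h1
      intro t ht
      have t1 : t < η := lt_of_lt_of_le ht.2 (min_le_left _ _)
      have t2 : t < v := lt_of_lt_of_le ht.2 (min_le_right _ _)
      have := hball (y := t) (by rw [Real.dist_eq, sub_zero, abs_of_pos ht.1]; exact t1)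
      simp only [Set.mem_compl_iff, Set.mem_ofPred_eq]
      intro hh
      have h3 := hh ⟨ht.1, t2.le⟩
      rw [Real.norm_eq_abs] at h3
      linarith [le_abs_self (f t)]
    rw [Real.volume_Ioo, ENNReal.ofReal_eq_zero] at hz
    have : 0 < min η v := lt_min hη hv
    linarith

lemma gJ_le (t : ℝ) : |gJ t| ≤ 1 := by
  rw [abs_of_pos (gJ_pos t), gJ, div_le_one (by positivity)]
  rw [Real.one_le_sqrt]; nlinarith [sq_nonneg t]

lemma Jfun_top {v : ℝ} (hv : 0 < v) : Jfun ∞ v = 1 := by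
  rw [Jfun_eq]; exact J_top gJ_cont (by simp [gJ]) gJ_le hv

lemma cosNorm_top : cosNorm ∞ = 1 := by
  rw [cosNorm_eq]
  exact J_top Real.continuous_cos Real.cos_zero Real.abs_cos_le_one (by have := Real.pi_pos; positivity)

lemma J_n0 {α r : ℝ} {p : ℝ≥0∞} (hα : 0 < α) (h0 : 0 < r) (h1 : r < 1) (hp : 1 ≤ p) {n : ℕ}
    (hn : n₀ α r p ≤ n) :
    Good α r n (α * r * (n : ℝ) ^ (-(1 - r))) (1 / (α * r) * (n : ℝ) ^ (-r)) := by
  have hπ := Real.pi_gt_three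
  set χ : ℝ := if p = ∞ then 1 else p.toReal with hχ
  set R : ℝ := (if p = 1 then 1 / 14 else if p = ∞ then 1 / (3 * π) ^ 3
        else (1 / (3 * π) ^ 3) * (p.toReal - 1) / p.toReal) with hR
  have hχ1 : 1 ≤ χ := by
    rw [hχ]; split_ifs with h
    · exact le_rfl
    · rw [← ENNReal.toReal_one]; exact ENNReal.toReal_mono h hp
  have hcube : 1 / (3 * π) ^ 3 ≤ 1 / 14 := by
    apply one_div_le_one_div_of_le (by norm_num)
    have : (9:ℝ) ^ 3 ≤ (3 * π) ^ 3 := by gcongr; linarith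
    linarith
  have hR14 : R ≤ 1 / 14 ∧ 0 < R := by
    rw [hR]; split_ifs with h1 h2
    · norm_num
    · exact ⟨hcube, by positivity⟩
    · have hq : 1 < p.toReal := by
        rw [← ENNReal.toReal_one]
        exact (ENNReal.toReal_lt_toReal (by simp) h2).2 (lt_of_le_of_ne hp (Ne.symm h1))
      have h3 : 0 < (p.toReal - 1) / p.toReal := div_pos (by linarith) (by linarith)
      have h4 : (p.toReal - 1) / p.toReal ≤ 1 := by rw [div_le_one (by linarith)]; linarith
      have h5 : 0 < 1 / (3 * π) ^ 3 := by positivity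
      rw [mul_div_assoc]
      exact ⟨(mul_le_of_le_one_right h5.le h4).trans hcube, by positivity⟩
  have hne : {n : ℕ | 0 < n ∧ 1 / (α * r) * (n : ℝ) ^ (-r) + α * r * χ * (n : ℝ) ^ (-(1 - r)) ≤ R}.Nonempty := by
    have l1 : Tendsto (fun n : ℕ => (n : ℝ) ^ (-r)) atTop (nhds 0) :=
      (tendsto_rpow_neg_atTop h0).comp tendsto_natCast_atTop_atTop
    have l2 : Tendsto (fun n : ℕ => (n : ℝ) ^ (-(1 - r))) atTop (nhds 0) :=
      (tendsto_rpow_neg_atTop (by linarith)).comp tendsto_natCast_atTop_atTop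
    have l3 := (l1.const_mul (1 / (α * r))).add (l2.const_mul (α * r * χ))
    simp only [mul_zero, add_zero] at l3
    obtain ⟨m, hm1, hm2⟩ := ((l3.eventually_lt_const hR14.2).and (eventually_gt_atTop 0)).exists
    exact ⟨m, hm2, hm1.le⟩
  have hmem := Nat.sInf_mem hne
  change 0 < n₀ α r p ∧ 1 / (α * r) * ((n₀ α r p : ℕ) : ℝ) ^ (-r) + α * r * χ * ((n₀ α r p : ℕ) : ℝ) ^ (-(1 - r)) ≤ R at hmem
  obtain ⟨hm0, hm⟩ := hmem
  have hm0' : (0:ℝ) < (n₀ α r p : ℕ) := by exact_mod_cast hm0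
  have hn0 : 0 < n := lt_of_lt_of_le hm0 hn
  have hn0' : (0:ℝ) < n := by exact_mod_cast hn0
  have hnn : ((n₀ α r p : ℕ) : ℝ) ≤ n := by exact_mod_cast hn
  have a1 : (n : ℝ) ^ (-r) ≤ ((n₀ α r p : ℕ) : ℝ) ^ (-r) :=
    Real.rpow_le_rpow_of_nonpos hm0' hnn (by linarith)
  have a2 : (n : ℝ) ^ (-(1 - r)) ≤ ((n₀ α r p : ℕ) : ℝ) ^ (-(1 - r)) :=
    Real.rpow_le_rpow_of_nonpos hm0' hnn (by linarith)
  have b1 : 1 / (α * r) * (n : ℝ) ^ (-r) ≤ 1 / (α * r) * ((n₀ α r p : ℕ) : ℝ) ^ (-r) := by gcongr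
  have b2 : α * r * χ * (n : ℝ) ^ (-(1 - r)) ≤ α * r * χ * ((n₀ α r p : ℕ) : ℝ) ^ (-(1 - r)) := by gcongr
  have p1 : 0 < 1 / (α * r) * (n : ℝ) ^ (-r) := by positivity
  have p2 : 0 < α * r * (n : ℝ) ^ (-(1 - r)) := by positivity
  have b3 : α * r * (n : ℝ) ^ (-(1 - r)) ≤ α * r * χ * (n : ℝ) ^ (-(1 - r)) := by
    have := mul_le_mul_of_nonneg_left hχ1 p2.le
    linarith
  refine ⟨hα, h0, h1, hn0, rfl, p2, by linarith, p1, by linarith, ?_⟩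
  have e : (n:ℝ) ^ (-(1 - r)) * (n:ℝ) ^ (-r) = (n:ℝ)⁻¹ := by
    rw [← Real.rpow_add hn0', ← Real.rpow_neg_one]; congr 1; ring
  calc (n:ℝ) * (α * r * (n : ℝ) ^ (-(1 - r))) * (1 / (α * r) * (n : ℝ) ^ (-r))
      = n * (α * r * (1 / (α * r))) * ((n:ℝ) ^ (-(1 - r)) * (n:ℝ) ^ (-r)) := by ring
    _ = 1 := by rw [e]; field_simp

lemma J_hold {p p' : ℝ≥0∞} (hp : 1 ≤ p) (h : 1 / p + 1 / p' = 1) :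
    ENNReal.HolderConjugate p' p ∧ 1 ≤ p' ∧ 1 / p.toReal + 1 / p'.toReal = 1 := by
  simp only [one_div] at h
  have h1 : p'⁻¹ ≤ 1 := by rw [← h]; exact le_add_self
  refine ⟨⟨by rw [add_comm]; simpa using h⟩, ?_, ?_⟩
  · simpa using h1
  · have h2 : p⁻¹ ≤ 1 := by rw [← h]; exact le_self_add
    have := congrArg ENNReal.toReal h
    rw [ENNReal.toReal_add (ne_top_of_le_ne_top (by simp) h2) (ne_top_of_le_ne_top (by simp) h1),
      ENNReal.toReal_inv, ENNReal.toReal_inv, ENNReal.toReal_one] at this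
    simpa using this

lemma Good.J_main {α r β δ ε : ℝ} {n : ℕ} {p p' : ℝ≥0∞} (G : Good α r n δ ε) (hp : 1 ≤ p)
    (h : 1 / p + 1 / p' = 1) :
    |PhiE α r β p n - cosNorm p' * π ^ (-(1 / p'.toReal)) * (δ ^ (-(1 / p.toReal)) * Jfun p' (π / δ))|
      ≤ (10 + 8 * π) * (ε * (δ ^ (-(1 / p.toReal)) * Jfun p' (π / δ))) + 12 * π := by
  have hπ := Real.pi_pos
  have hδ := G.hδ0
  have hε := G.hε0
  obtain ⟨hc, hs, hq⟩ := J_hold hp h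
  rcases eq_or_ne p' ∞ with rfl | hs2
  · have hp1 : p = 1 := by simpa using h
    subst hp1
    have k := G.K_inf (β := β)
    rw [Jfun_top (by positivity), cosNorm_top]
    simp only [ENNReal.toReal_top, ENNReal.toReal_one, div_zero, neg_zero, Real.rpow_zero, div_one, mul_one,
      one_mul, Real.rpow_neg_one]
    rw [one_div] at k
    have : 0 < ε * δ⁻¹ := by positivity
    have : 0 < π * (ε * δ⁻¹) := by positivity
    refine k.trans ?_
    nlinarith
  · have k := G.K_fin (β := β) hp hs hs2 hc
    have hJ : 0 ≤ Jfun p' (π / δ) := ENNReal.toReal_nonneg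
    have hτ : 1 ≤ p'.toReal := by
      rw [← ENNReal.toReal_one]; exact ENNReal.toReal_mono hs2 hs
    have e0 : (p'.toReal)⁻¹ - 1 = -(1 / p.toReal) := by rw [← one_div]; linarith
    set Z := δ ^ (-(1 / p.toReal)) * Jfun p' (π / δ) with hZ
    have hZ0 : 0 ≤ Z := by positivity
    rw [J_scale hδ hs hs2, e0, mul_assoc, ← hZ] at k
    have h2 : (2:ℝ) ^ (p'.toReal)⁻¹ ≤ 2 := by
      conv_rhs => rw [← Real.rpow_one 2]
      exact Real.rpow_le_rpow_of_exponent_le (by norm_num) (inv_le_one_of_one_le₀ hτ)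
    have e1 : kap p' * (2 ^ (p'.toReal)⁻¹ * Z) = cosNorm p' * π ^ (-(1 / p'.toReal)) * Z := by
      rw [kap, Real.mul_rpow (by norm_num) hπ.le, Real.rpow_neg hπ.le, one_div]
      have : (0:ℝ) < 2 ^ (p'.toReal)⁻¹ := by positivity
      have : (0:ℝ) < π ^ (p'.toReal)⁻¹ := by positivity
      field_simp
    rw [e1] at k
    refine k.trans ?_
    have : (4 + 4 * π) * ε * (2 ^ (p'.toReal)⁻¹ * Z) ≤ (4 + 4 * π) * ε * (2 * Z) := by gcongr
    have : 0 ≤ ε * Z := by positivity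
    nlinarith

theorem statement0 (α r β : ℝ) (p p' : ℝ≥0∞)
    (hr0 : 0 < r) (hr1 : r < 1) (hα : 0 < α) (hp : 1 ≤ p)
    (hpp' : 1 / p + 1 / p' = 1) :
    ∀ n : ℕ, n₀ α r p ≤ n →
      ∃ γ : ℝ, |γ| ≤ (14 * π) ^ 2 ∧
        EnC α r β p n =
          Real.exp (-α * (n : ℝ) ^ r) * (n : ℝ) ^ ((1 - r) / p.toReal) *
            (cosNorm p' / (π ^ ((1 : ℝ) + 1 / p'.toReal) * (α * r) ^ (1 / p.toReal)) *
                Jfun p' (π * (n : ℝ) ^ (1 - r) / (α * r)) +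
              γ * (1 / (α * r) ^ ((1 : ℝ) + 1 / p.toReal) *
                    Jfun p' (π * (n : ℝ) ^ (1 - r) / (α * r)) * (n : ℝ) ^ (-r) +
                  (n : ℝ) ^ (-((1 - r) / p.toReal)))) := by
  intro n hn
  have hπ := Real.pi_gt_three
  have hπ0 := Real.pi_pos
  have G := J_n0 hα hr0 hr1 hp hn
  have k := G.J_main (β := β) hp hpp'
  have hn0 : (0:ℝ) < n := by exact_mod_cast G.hn
  have har : 0 < α * r := by positivity
  have hv : π * (n : ℝ) ^ (1 - r) / (α * r) = π / (α * r * (n : ℝ) ^ (-(1 - r))) := by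
    rw [Real.rpow_neg hn0.le]; field_simp
  rw [hv]
  set δ := α * r * (n : ℝ) ^ (-(1 - r)) with hδ
  set ε := 1 / (α * r) * (n : ℝ) ^ (-r) with hε
  set J := Jfun p' (π / δ) with hJd
  have hJ : 0 ≤ J := ENNReal.toReal_nonneg
  set Φ := PhiE α r β p n with hΦ
  set C := cosNorm p' with hC
  have hδ0 := G.hδ0
  have hε0 := G.hε0
  set Z := δ ^ (-(1 / p.toReal)) * J with hZ
  have hZ0 : 0 ≤ Z := by positivity
  have hD : δ ^ (-(1 / p.toReal)) * (α * r) ^ (1 / p.toReal) = (n : ℝ) ^ ((1 - r) / p.toReal) := by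
    rw [hδ, Real.mul_rpow har.le (by positivity), ← Real.rpow_mul hn0.le, Real.rpow_neg har.le,
      show -(1 - r) * -(1 / p.toReal) = (1 - r) / p.toReal by ring]
    field_simp
  have hA : 0 < (α * r) ^ (1 / p.toReal) := by positivity
  have hP : 0 < π ^ (1 / p'.toReal) := by positivity
  have hDp : 0 < (n : ℝ) ^ ((1 - r) / p.toReal) := by positivity
  have hεZ : 0 ≤ ε * Z := by positivity
  have hden : 0 < π * (ε * Z + 1) := by positivity
  refine ⟨(Φ - C * π ^ (-(1 / p'.toReal)) * Z) / (π * (ε * Z + 1)), ?_, ?_⟩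
  · rw [abs_div, abs_of_pos hden, div_le_iff₀ hden]
    refine k.trans ?_
    have h1 : (10 + 8 * π) * (ε * Z) + 12 * π ≤ (12 * π) * (ε * Z + 1) := by nlinarith
    have h2 : 12 * π ≤ (14 * π) ^ 2 * π := by nlinarith
    calc _ ≤ (12 * π) * (ε * Z + 1) := h1
      _ ≤ (14 * π) ^ 2 * π * (ε * Z + 1) := by gcongr
      _ = _ := by ring
  · have hE : EnC α r β p n = Real.exp (-α * (n : ℝ) ^ r) / π * Φ := PhiE_eq
    set γ := (Φ - C * π ^ (-(1 / p'.toReal)) * Z) / (π * (ε * Z + 1)) with hγ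
    have hΦγ : Φ = C * π ^ (-(1 / p'.toReal)) * Z + γ * (π * (ε * Z + 1)) := by
      rw [hγ, div_mul_cancel₀ _ hden.ne']; ring
    rw [hE, hΦγ, hZ, hε, Real.rpow_neg hπ0.le, Real.rpow_add hπ0, Real.rpow_add har, Real.rpow_neg hn0.le ((1 - r) / p.toReal),
      ← hD, Real.rpow_one, Real.rpow_one]
    have hδp : 0 < δ ^ (-(1 / p.toReal)) := by positivity
    field_simp
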